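/- Let k be a field and let T = {(x,y) ∈ ℝ² : x + y > 0} be the strictly upper-triangular subposet of ℝ². Every pointwise finite-dimensional, middle exact persistence module M : T → Vec_k is isomorphic to a direct sum of modules k_{J ∩ T}, where each J ⊆ ℝ² is a block. -/

import Mathlib

namespace PMod

variable (k : Type) [Field k]

/-- A persistence module over a preordered set `P` with values in `k`-vector spaces. -/
structure PersistenceModule (P : Type) [Preorder P] where
  V : P → Type
  [addCommGroup : ∀ x, AddCommGroup (V x)]
  [module : ∀ x, Module k (V x)]
  map : ∀ {x y : P}, x ≤ y → (V x →ₗ[k] V y)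
  map_refl : ∀ x : P, map (le_refl x) = LinearMap.id
  map_trans : ∀ {x y z : P} (hxy : x ≤ y) (hyz : y ≤ z),
      map (le_trans hxy hyz) = (map hyz).comp (map hxy)

attribute [instance] PersistenceModule.addCommGroup PersistenceModule.module

variable {k}

/-- A morphism of persistence modules. -/
structure Hom {P : Type} [Preorder P] (M N : PersistenceModule k P) where
  app : ∀ x, M.V x →ₗ[k] N.V x
  natural : ∀ {x y : P} (h : x ≤ y), (N.map h).comp (app x) = (app y).comp (M.map h)

/-- A morphism of persistence modules is an isomorphism iff it is pointwise bijective. -/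
def IsIsoHom {P : Type} [Preorder P] {M N : PersistenceModule k P} (f : Hom M N) : Prop :=
  ∀ x, Function.Bijective (f.app x)

/-- Two persistence modules are isomorphic if there is a pointwise bijective
morphism between them. -/
def Isomorphic {P : Type} [Preorder P] (M N : PersistenceModule k P) : Prop :=
  ∃ f : Hom M N, IsIsoHom f

/-- The direct sum of a family of persistence modules, taken pointwise
(`Π₀` is the finitely supported product, i.e. the direct sum). -/
noncomputable def directSum {P : Type} [Preorder P] {ι : Type}
    (N : ι → PersistenceModule k P) : PersistenceModule k P where
  V x := Π₀ i, (N i).V x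
  map {x y} h := DFinsupp.mapRange.linearMap (fun i => (N i).map h)
  map_refl x := by
    have h : (fun i => (N i).map (le_refl x)) =
        fun i => (LinearMap.id : (N i).V x →ₗ[k] (N i).V x) :=
      funext fun i => (N i).map_refl x
    rw [h]
    exact DFinsupp.mapRange.linearMap_id
  map_trans {x y z} hxy hyz := by
    have h : (fun i => (N i).map (le_trans hxy hyz)) =
        fun i => ((N i).map hyz).comp ((N i).map hxy) :=
      funext fun i => (N i).map_trans hxy hyz
    rw [h]
    exact DFinsupp.mapRange.linearMap_comp _ _

/-- The binary direct sum of two persistence modules, taken pointwise. -/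
def sum2 {P : Type} [Preorder P] (M N : PersistenceModule k P) : PersistenceModule k P where
  V x := M.V x × N.V x
  map h := (M.map h).prodMap (N.map h)
  map_refl x := by
    rw [M.map_refl, N.map_refl]
    exact LinearMap.prodMap_id
  map_trans hxy hyz := by
    rw [M.map_trans hxy hyz, N.map_trans hxy hyz]
    exact (LinearMap.prodMap_comp _ _ _ _).symm

/-- The zero persistence module predicate. -/
def IsZero {P : Type} [Preorder P] (M : PersistenceModule k P) : Prop :=
  ∀ x, ∀ v : M.V x, v = 0

/-- A persistence module is indecomposable if it is nonzero and whenever it is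
isomorphic to a direct sum of two modules, one of the summands is zero. -/
def Indecomposable {P : Type} [Preorder P] (M : PersistenceModule k P) : Prop :=
  ¬ IsZero M ∧ ∀ M' M'' : PersistenceModule k P,
    Isomorphic M (sum2 M' M'') → IsZero M' ∨ IsZero M''

variable (k)

/-- A subset of a preordered set is convex. -/
def IsConvex {P : Type} [Preorder P] (I : Set P) : Prop :=
  ∀ p q r : P, p ≤ q → q ≤ r → p ∈ I → r ∈ I → q ∈ I

open Classical in
/-- The fibre of the interval module `k_I` at `x`: a copy of `k` if `x ∈ I`, else `0`. -/
noncomputable def kMod {P : Type} [Preorder P] (I : Set P) (x : P) : Submodule k k :=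
  if x ∈ I then ⊤ else ⊥

/-- The canonical generator of the fibre of the interval module at a point of `I`. -/
noncomputable def kGen {P : Type} [Preorder P] {I : Set P} {x : P} (hx : x ∈ I) :
    kMod k I x :=
  ⟨1, by simp [kMod, hx]⟩

open Classical in
/-- The structure maps of the interval module. -/
noncomputable def intervalMap {P : Type} [Preorder P] (I : Set P) {x y : P} (_ : x ≤ y) :
    kMod k I x →ₗ[k] kMod k I y where
  toFun m := if hy : y ∈ I then ⟨(m : k), by simp [kMod, hy]⟩ else 0
  map_add' a b := by
    by_cases hy : y ∈ I <;> simp [hy]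
  map_smul' c a := by
    by_cases hy : y ∈ I <;> simp [hy]

theorem kMod_coe_eq_zero {P : Type} [Preorder P] {I : Set P} {x : P} (hx : x ∉ I)
    (m : kMod k I x) : (m : k) = 0 := by
  have hm := m.2
  simp only [kMod, if_neg hx, Submodule.mem_bot] at hm
  exact hm

/-- The interval module `k_I` of a convex subset `I ⊆ P`: one-dimensional with
identity structure maps on `I`, and zero outside of `I`. -/
noncomputable def intervalModule {P : Type} [Preorder P] (I : Set P) (hI : IsConvex I) :
    PersistenceModule k P where
  V x := kMod k I x
  map h := intervalMap k I h
  map_refl x := by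
    ext m
    by_cases hx : x ∈ I
    · simp [intervalMap, hx]
    · simp [intervalMap, hx, kMod_coe_eq_zero k hx m]
  map_trans {x y z} hxy hyz := by
    ext m
    by_cases hz : z ∈ I
    · by_cases hy : y ∈ I
      · simp [intervalMap, hz, hy]
      · have hx : x ∉ I := fun hx => hy (hI x y z hxy hyz hx hz)
        simp [intervalMap, hz, hy, kMod_coe_eq_zero k hx m]
    · by_cases hy : y ∈ I <;> simp [intervalMap, hz, hy]

/-- The constant persistence module `k_P` with value `k` everywhere. -/
def constModule (P : Type) [Preorder P] : PersistenceModule k P where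
  V _ := k
  map _ := LinearMap.id
  map_refl _ := rfl
  map_trans _ _ := rfl

variable {k}

/-- Connectedness of a subset of a preordered set: any two points are joined by
a finite zigzag of comparable points inside the subset. -/
def IsConn {P : Type} [Preorder P] (I : Set P) : Prop :=
  ∀ p ∈ I, ∀ q ∈ I, ∃ (n : ℕ) (r : ℕ → P), r 0 = p ∧ r n = q ∧ (∀ i ≤ n, r i ∈ I) ∧
    ∀ i < n, r i ≤ r (i + 1) ∨ r (i + 1) ≤ r i

/-- An interval in a poset: a nonempty convex connected subset. -/
def IsInterval {P : Type} [Preorder P] (I : Set P) : Prop :=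
  I.Nonempty ∧ IsConvex I ∧ IsConn I

/-- An ideal: a subset closed under going down. -/
def IsIdeal {P : Type} [Preorder P] (I : Set P) : Prop :=
  ∀ p q : P, p ≤ q → q ∈ I → p ∈ I

/-- A filter: a subset closed under going up. -/
def IsFilter {P : Type} [Preorder P] (I : Set P) : Prop :=
  ∀ p q : P, p ≤ q → p ∈ I → q ∈ I

/-- An interval in a totally ordered set: a nonempty convex subset. -/
def IsIntervalLin {P : Type} [Preorder P] (I : Set P) : Prop :=
  I.Nonempty ∧ IsConvex I

theorem IsConvex.prod {S T : Type} [Preorder S] [Preorder T] {A : Set S} {B : Set T}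
    (hA : IsConvex A) (hB : IsConvex B) : IsConvex (A ×ˢ B) := by
  intro p q r hpq hqr hp hr
  exact ⟨hA _ _ _ hpq.1 hqr.1 hp.1 hr.1, hB _ _ _ hpq.2 hqr.2 hp.2 hr.2⟩

theorem isConvex_univ {P : Type} [Preorder P] : IsConvex (Set.univ : Set P) :=
  fun _ _ _ _ _ _ _ => trivial

/-- A block in the product of two totally ordered sets. -/
def IsBlock {S T : Type} [LinearOrder S] [LinearOrder T] (I : Set (S × T)) : Prop :=
  I.Nonempty ∧ (
    (∃ JS JT, IsIntervalLin JS ∧ IsIdeal JS ∧ IsIntervalLin JT ∧ IsIdeal JT ∧ I = JS ×ˢ JT) ∨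
    (∃ JS JT, IsIntervalLin JS ∧ IsFilter JS ∧ IsIntervalLin JT ∧ IsFilter JT ∧ I = JS ×ˢ JT) ∨
    (∃ JS, IsIntervalLin JS ∧ I = JS ×ˢ (Set.univ : Set T)) ∨
    (∃ JT, IsIntervalLin JT ∧ I = (Set.univ : Set S) ×ˢ JT))

theorem IsBlock.isConvex {S T : Type} [LinearOrder S] [LinearOrder T] {I : Set (S × T)}
    (h : IsBlock I) : IsConvex I := by
  obtain ⟨-, h | h | h | h⟩ := h
  · obtain ⟨JS, JT, hS, -, hT, -, rfl⟩ := h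
    exact hS.2.prod hT.2
  · obtain ⟨JS, JT, hS, -, hT, -, rfl⟩ := h
    exact hS.2.prod hT.2
  · obtain ⟨JS, hS, rfl⟩ := h
    exact hS.2.prod isConvex_univ
  · obtain ⟨JT, hT, rfl⟩ := h
    exact isConvex_univ.prod hT.2

/-- Convexity is inherited by preimages in a subposet. -/
theorem IsConvex.preimage {P : Type} [Preorder P] {J : Set P} (hJ : IsConvex J)
    (Q : Set P) : IsConvex {p : Q | (p : P) ∈ J} :=
  fun p q r hpq hqr hp hr => hJ p q r hpq hqr hp hr

/-- The restriction of a persistence module to a subposet. -/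
def restrict {P : Type} [Preorder P] (M : PersistenceModule k P) (Q : Set P) :
    PersistenceModule k Q where
  V q := M.V q
  map h := M.map h
  map_refl q := M.map_refl q
  map_trans hxy hyz := M.map_trans hxy hyz

/-- Middle exactness for persistence modules over a product of two totally ordered sets:
for every rectangle `a = (x,y) ≤ b = (x,y'), c = (x',y) ≤ d = (x',y')` the sequence
`M_a → M_b ⊕ M_c → M_d` is exact at `M_b ⊕ M_c`. -/
def MiddleExact {S T : Type} [Preorder S] [Preorder T]
    (M : PersistenceModule k (S × T)) : Prop :=
  ∀ (x x' : S) (y y' : T) (hx : x ≤ x') (hy : y ≤ y')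
    (mb : M.V (x, y')) (mc : M.V (x', y)),
    M.map (show (x, y') ≤ (x', y') from ⟨hx, le_refl y'⟩) mb =
      M.map (show (x', y) ≤ (x', y') from ⟨le_refl x', hy⟩) mc →
    ∃ ma : M.V (x, y),
      M.map (show (x, y) ≤ (x, y') from ⟨le_refl x, hy⟩) ma = mb ∧
      M.map (show (x, y) ≤ (x', y) from ⟨hx, le_refl y⟩) ma = mc


theorem IsIdeal.isConvex {P : Type} [Preorder P] {I : Set P} (h : IsIdeal I) : IsConvex I :=
  fun _ q r _ hqr _ hr => h q r hqr hr

theorem IsFilter.isConvex {P : Type} [Preorder P] {I : Set P} (h : IsFilter I) : IsConvex I :=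
  fun p q _ hpq _ hp _ => h p q hpq hp


/-- Convexity of the preimage of a convex subset of `T` in a subposet of `S × T`. -/
theorem IsConvex.preimageSnd {S T : Type} [Preorder S] [Preorder T] {J : Set T}
    (hJ : IsConvex J) (Q : Set (S × T)) : IsConvex {p : ↥Q | (p : S × T).2 ∈ J} :=
  fun p q r hpq hqr hp hr =>
    hJ _ _ _ (Subtype.coe_le_coe.mpr hpq).2 (Subtype.coe_le_coe.mpr hqr).2 hp hr

end PMod

namespace PMod

/-- The strictly upper-triangular subset of the plane. -/
def upperT : Set (ℝ × ℝ) := {p | 0 < p.1 + p.2}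

/-- The upper-triangular subset of the plane. -/
def upperTbar : Set (ℝ × ℝ) := {p | 0 ≤ p.1 + p.2}

/-- Middle exactness for a persistence module over a subposet `Q ⊆ ℝ²`: for every
rectangle `a = (x,y)`, `b = (x,y')`, `c = (x',y)`, `d = (x',y')` with all corners in
`Q`, the sequence `M_a → M_b ⊕ M_c → M_d` is exact at `M_b ⊕ M_c`. -/
def MiddleExactSub {k : Type} [Field k] (Q : Set (ℝ × ℝ))
    (M : PersistenceModule k ↥Q) : Prop :=
  ∀ (x x' y y' : ℝ) (hx : x ≤ x') (hy : y ≤ y')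
    (ha : (x, y) ∈ Q) (hb : (x, y') ∈ Q) (hc : (x', y) ∈ Q) (hd : (x', y') ∈ Q),
    ∀ (mb : M.V ⟨(x, y'), hb⟩) (mc : M.V ⟨(x', y), hc⟩),
      M.map (show (⟨(x, y'), hb⟩ : ↥Q) ≤ ⟨(x', y'), hd⟩ from
        Subtype.mk_le_mk.mpr ⟨hx, le_refl y'⟩) mb =
      M.map (show (⟨(x', y), hc⟩ : ↥Q) ≤ ⟨(x', y'), hd⟩ from
        Subtype.mk_le_mk.mpr ⟨le_refl x', hy⟩) mc →
      ∃ ma : M.V ⟨(x, y), ha⟩,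
        M.map (show (⟨(x, y), ha⟩ : ↥Q) ≤ ⟨(x, y'), hb⟩ from
          Subtype.mk_le_mk.mpr ⟨le_refl x, hy⟩) ma = mb ∧
        M.map (show (⟨(x, y), ha⟩ : ↥Q) ≤ ⟨(x', y), hc⟩ from
          Subtype.mk_le_mk.mpr ⟨hx, le_refl y⟩) ma = mc

/-- Convexity of the preimage in a subposet of a convex subset of `ℝ²`. -/
theorem IsConvex.preimageSub {J : Set (ℝ × ℝ)} (hJ : IsConvex J) (Q : Set (ℝ × ℝ)) :
    IsConvex {p : ↥Q | (p : ℝ × ℝ) ∈ J} :=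
  fun p q r hpq hqr hp hr =>
    hJ _ _ _ (Subtype.coe_le_coe.mpr hpq) (Subtype.coe_le_coe.mpr hqr) hp hr

end PMod

namespace PMod

section General

variable {k : Type} [Field k] {P : Type}

/-- Compactness: a system of linear equations, each involving finitely many coordinates in
finite-dimensional spaces, is solvable as soon as each finite subsystem is. -/
theorem compactness (V : P → Type) [∀ p, AddCommGroup (V p)] [∀ p, Module k (V p)]
    [∀ p, FiniteDimensional k (V p)] {I : Type} (l : I → Module.Dual k (∀ p, V p)) (c : I → k)
    (E : Submodule k (Module.Dual k (∀ p, V p)))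
    (hE : E = Submodule.span k {g | ∃ (p : P) (φ : Module.Dual k (V p)),
      g = φ.comp (LinearMap.proj p)})
    (hl : ∀ i, l i ∈ E)
    (hfin : ∀ F : Finset I, ∃ s : (∀ p, V p), ∀ i ∈ F, l i s = c i) :
    ∃ s : (∀ p, V p), ∀ i, l i s = c i := by
  classical
  let h : (I →₀ k) →ₗ[k] Module.Dual k (∀ p, V p) := Finsupp.linearCombination k l
  let g : (I →₀ k) →ₗ[k] k := Finsupp.linearCombination k c
  have hker : LinearMap.ker h ≤ LinearMap.ker g := by
    intro a ha
    rw [LinearMap.mem_ker] at ha ⊢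
    obtain ⟨s, hs⟩ := hfin a.support
    have h1 : h a s = 0 := by rw [ha]; rfl
    have h2 : h a s = g a := by
      simp only [h, g, Finsupp.linearCombination_apply, Finsupp.sum, LinearMap.sum_apply,
        LinearMap.smul_apply]
      exact Finset.sum_congr rfl fun i hi => by rw [hs i hi]
    rw [← h2, h1]
  obtain ⟨g', hg'⟩ : ∃ g' : Module.Dual k (∀ p, V p) →ₗ[k] k, g'.comp h = g := by
    let q := (LinearMap.ker h).liftQ g hker
    let e := h.quotKerEquivRange
    obtain ⟨g', hg'⟩ := LinearMap.exists_extend (q.comp e.symm.toLinearMap)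
    refine ⟨g', LinearMap.ext fun a => ?_⟩
    have := LinearMap.congr_fun hg' (e (Submodule.Quotient.mk a))
    simp only [LinearMap.comp_apply, LinearEquiv.coe_coe, LinearEquiv.symm_apply_apply] at this
    simpa [e, q] using this
  have hs : ∀ p, ∃ v : V p, ∀ φ : Module.Dual k (V p), φ v = g' (φ.comp (LinearMap.proj p)) := by
    intro p
    let G : Module.Dual k (Module.Dual k (V p)) :=
      g'.comp (LinearMap.lcomp k k (LinearMap.proj p))
    refine ⟨(Module.evalEquiv k (V p)).symm G, fun φ => ?_⟩
    rw [Module.apply_evalEquiv_symm_apply]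
    rfl
  choose s hs using hs
  refine ⟨s, fun i => ?_⟩
  have key : ∀ x ∈ E, x s = g' x := by
    intro x hx
    rw [hE] at hx
    induction hx using Submodule.span_induction with
    | mem x hx =>
      obtain ⟨p, φ, rfl⟩ := hx
      exact hs p φ
    | zero => simp
    | add x y _ _ hx hy => simp [hx, hy]
    | smul a x _ hx => simp [hx]
  rw [key _ (hl i)]
  have := LinearMap.congr_fun hg' (Finsupp.single i 1)
  simpa [h, g] using this

variable [Preorder P]

theorem map_map (M : PersistenceModule k P) {p q r : P} (h1 : p ≤ q) (h2 : q ≤ r) (v : M.V p) :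
    M.map h2 (M.map h1 v) = M.map (h1.trans h2) v := by
  rw [M.map_trans h1 h2]; rfl

theorem map_id (M : PersistenceModule k P) {p : P} (h : p ≤ p) (v : M.V p) :
    M.map h v = v := by
  have := LinearMap.congr_fun (M.map_refl p) v
  exact this

/-- `s` is a section on `F` supported on `J`. -/
def GoodOn (M : PersistenceModule k P) (J : Set P) (p0 : P) (m0 : M.V p0) (F : Finset P)
    (s : ∀ p, M.V p) : Prop :=
  (∀ p ∈ F, ∀ q ∈ F, ∀ h : p ≤ q, p ∈ J → M.map h (s p) = s q) ∧
    (∀ q ∈ F, q ∉ J → s q = 0) ∧ (p0 ∈ F → s p0 = m0)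

theorem GoodOn.mono {M : PersistenceModule k P} {J : Set P} {p0 : P} {m0 : M.V p0}
    {F F' : Finset P} {s : ∀ p, M.V p} (h : GoodOn M J p0 m0 F s) (hF : F' ⊆ F) :
    GoodOn M J p0 m0 F' s :=
  ⟨fun p hp q hq => h.1 p (hF hp) q (hF hq), fun q hq => h.2.1 q (hF hq), fun hp => h.2.2 (hF hp)⟩

theorem exists_section (M : PersistenceModule k P) (hfd : ∀ p, FiniteDimensional k (M.V p))
    (J : Set P) (p0 : P) (m0 : M.V p0)
    (hfin : ∀ F : Finset P, ∃ s, GoodOn M J p0 m0 F s) :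
    ∃ s : ∀ p, M.V p, (∀ p q (h : p ≤ q), p ∈ J → M.map h (s p) = s q) ∧
      (∀ q, q ∉ J → s q = 0) ∧ s p0 = m0 := by
  classical
  set E := Submodule.span k {g : Module.Dual k (∀ p, M.V p) |
    ∃ (p : P) (φ : Module.Dual k (M.V p)), g = φ.comp (LinearMap.proj p)} with hE
  let I := {x : Module.Dual k (∀ p, M.V p) × k // x.1 ∈ E ∧
    ∃ F : Finset P, ∀ s, GoodOn M J p0 m0 F s → x.1 s = x.2}
  obtain ⟨s, hs⟩ := compactness (k := k) M.V (I := I) (fun i => i.1.1) (fun i => i.1.2) E hE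
    (fun i => i.2.1) (by
      intro A
      choose F hF using fun i : I => i.2.2
      obtain ⟨s, hs⟩ := hfin (A.biUnion F)
      exact ⟨s, fun i hi => hF i s (hs.mono (Finset.subset_biUnion_of_mem F hi))⟩)
  have mE : ∀ p (φ : Module.Dual k (M.V p)), φ.comp (LinearMap.proj p) ∈ E := fun p φ =>
    Submodule.subset_span ⟨p, φ, rfl⟩
  refine ⟨s, ?_, ?_, ?_⟩
  · intro p q h hp
    rw [← sub_eq_zero, ← Module.forall_dual_apply_eq_zero_iff k]
    intro φ
    have := hs ⟨((φ.comp (M.map h)).comp (LinearMap.proj p) - φ.comp (LinearMap.proj q), 0),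
      E.sub_mem (mE _ _) (mE _ _), {p, q}, by
        intro s hs
        have := hs.1 p (by simp) q (by simp) h hp
        simp [this]⟩
    simpa using this
  · intro q hq
    rw [← Module.forall_dual_apply_eq_zero_iff k]
    intro φ
    exact hs ⟨(φ.comp (LinearMap.proj q), 0), mE _ _, {q}, by
        intro s hs
        have := hs.2.1 q (by simp) hq
        simp [this]⟩
  · rw [← sub_eq_zero, ← Module.forall_dual_apply_eq_zero_iff k]
    intro φ
    have := hs ⟨(φ.comp (LinearMap.proj p0), φ m0), mE _ _, {p0}, by
        intro s hs
        have := hs.2.2 (by simp)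
        simp [this]⟩
    simp only [LinearMap.comp_apply, LinearMap.proj_apply] at this
    rw [map_sub, this, sub_self]

/-- `M` has the interval-like module supported on `J` as a summand. -/
def HasSummand (M : PersistenceModule k P) (J : Set P) : Prop :=
  ∃ (s : ∀ p, M.V p) (f : ∀ p, Module.Dual k (M.V p)),
    (∀ p q (h : p ≤ q), p ∈ J → M.map h (s p) = s q) ∧ (∀ q, q ∉ J → s q = 0) ∧
    (∀ p q (h : p ≤ q), q ∈ J → ∀ v, f q (M.map h v) = f p v) ∧ (∀ p, p ∉ J → f p = 0) ∧
    ∀ p ∈ J, f p (s p) = 1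

theorem exists_cosection (M : PersistenceModule k P) (J : Set P) (hne : J.Nonempty)
    (hdir : ∀ p ∈ J, ∀ q ∈ J, ∃ r ∈ J, p ≤ r ∧ q ≤ r)
    (s : ∀ p, M.V p) (hs1 : ∀ p q (h : p ≤ q), p ∈ J → M.map h (s p) = s q)
    (hs2 : ∀ q, q ∉ J → s q = 0)
    (N : ∀ p, Submodule k (M.V p))
    (hN1 : ∀ p q (h : p ≤ q), p ∈ J → q ∈ J → ∀ v ∈ N p, M.map h v ∈ N q)
    (hN2 : ∀ p q (h : p ≤ q), p ∉ J → q ∈ J → ∀ v, M.map h v ∈ N q)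
    (hsN : ∀ p ∈ J, s p ∉ N p) : HasSummand M J := by
  classical
  let G : J → Type := fun p => M.V p ⧸ N p
  let φ : ∀ p q : J, p ≤ q → G p →ₗ[k] G q := fun p q h =>
    (N p).mapQ (N q) (M.map h) (fun v hv => hN1 p q h p.2 q.2 v hv)
  have hφ : ∀ (p q : J) (h : p ≤ q) (v : M.V p),
      φ p q h ((N p).mkQ v) = (N q).mkQ (M.map h v) := fun p q h v => rfl
  have : DirectedSystem G (φ · · ·) := by
    refine ⟨fun p x => ?_, fun p q r h1 h2 x => ?_⟩
    · obtain ⟨v, rfl⟩ := Submodule.mkQ_surjective _ x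
      exact (hφ p p le_rfl v).trans (by rw [map_id])
    · obtain ⟨v, rfl⟩ := Submodule.mkQ_surjective _ x
      refine (congrArg _ (hφ _ _ h1 v)).trans ((hφ _ _ h2 _).trans ?_)
      refine Eq.trans ?_ (hφ _ _ (h1.trans h2) v).symm
      rw [map_map]
  have : IsDirectedOrder J := ⟨fun p q => by
    obtain ⟨r, hr, h1, h2⟩ := hdir p p.2 q q.2
    exact ⟨⟨r, hr⟩, h1, h2⟩⟩
  let D := Module.DirectLimit G φ
  let o : ∀ p : J, M.V p →ₗ[k] D := fun p =>
    (Module.DirectLimit.of k J G φ p).comp (N p).mkQ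
  have ho : ∀ (p q : J) (h : p ≤ q) v, o q (M.map h v) = o p v := by
    intro p q h v
    have := Module.DirectLimit.of_f (R := k) (G := G) (f := φ) (hij := h) (x := (N p).mkQ v)
    exact (congrArg _ (hφ p q h v).symm).trans this
  obtain ⟨p0, hp0⟩ := hne
  have hne0 : o ⟨p0, hp0⟩ (s p0) ≠ 0 := by
    intro h0
    obtain ⟨q, h, hq⟩ := Module.DirectLimit.of.zero_exact h0
    have hq' : (N q).mkQ (M.map h (s p0)) = 0 := hq
    rw [hs1 p0 q h hp0] at hq'
    exact hsN q q.2 (by simpa using hq')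
  obtain ⟨ψ, hψ⟩ : ∃ ψ : Module.Dual k D, ψ (o ⟨p0, hp0⟩ (s p0)) = 1 := by
    by_contra hcon
    apply hne0
    rw [← Module.forall_dual_apply_eq_zero_iff k]
    intro ψ
    by_contra hψ
    exact hcon ⟨(ψ (o ⟨p0, hp0⟩ (s p0)))⁻¹ • ψ, by simp [hψ]⟩
  refine ⟨s, fun p => if hp : p ∈ J then ψ.comp (o ⟨p, hp⟩) else 0, hs1, hs2, ?_, ?_, ?_⟩
  · intro p q h hq v
    by_cases hp : p ∈ J
    · simp only [hp, hq, dif_pos, LinearMap.comp_apply]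
      rw [← ho ⟨p, hp⟩ ⟨q, hq⟩ h]
    · simp only [hp, hq, dif_pos, dif_neg, LinearMap.comp_apply, not_false_eq_true]
      have : (N q).mkQ (M.map h v) = 0 := by
        simpa using hN2 p q h hp hq v
      simp only [o, LinearMap.comp_apply, this, map_zero, LinearMap.zero_apply]
  · intro p hp
    simp [hp]
  · intro p hp
    simp only [hp, dif_pos, LinearMap.comp_apply]
    obtain ⟨r, hr, h1, h2⟩ := hdir p hp p0 hp0
    rw [← ho ⟨p, hp⟩ ⟨r, hr⟩ h1, hs1 p r h1 hp, ← hs1 p0 r h2 hp0, ho ⟨p0, hp0⟩ ⟨r, hr⟩ h2, hψ]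

/-- In a nonempty family of subspaces of a finite-dimensional space, there is a minimal one. -/
theorem exists_min {V : Type} [AddCommGroup V] [Module k V] [FiniteDimensional k V]
    (C : Set (Submodule k V)) (hne : ∃ A ∈ C, A ≠ ⊥) (hchain : ∀ A ∈ C, ∀ B ∈ C, A ≤ B ∨ B ≤ A) :
    ∃ A ∈ C, A ≠ ⊥ ∧ ∀ B ∈ C, B ≠ ⊥ → A ≤ B := by
  obtain ⟨A, hA, hmin⟩ := (wellFounded_lt (α := Submodule k V)).has_min {A | A ∈ C ∧ A ≠ ⊥} hne
  refine ⟨A, hA.1, hA.2, fun B hB hB0 => ?_⟩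
  rcases hchain A hA.1 B hB with h | h
  · exact h
  · rcases h.lt_or_eq with h' | h'
    · exact absurd h' (hmin B ⟨hB, hB0⟩)
    · exact h'.ge

end General

end PMod

namespace PMod

section Triangle

variable {k : Type} [Field k]

/-- The point `(x, y)` of the triangle. -/
abbrev pt (x y : ℝ) (h : 0 < x + y) : ↥upperT := ⟨(x, y), h⟩

theorem pt_le {x y x' y' : ℝ} {h : 0 < x + y} {h' : 0 < x' + y'} (hx : x ≤ x') (hy : y ≤ y') :
    pt x y h ≤ pt x' y' h' := ⟨hx, hy⟩

theorem me {M : PersistenceModule k ↥upperT} (hme : MiddleExactSub upperT M)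
    {x x' y y' : ℝ} {ha : 0 < x + y} {hb : 0 < x + y'} {hc : 0 < x' + y} {hd : 0 < x' + y'}
    (hab : pt x y ha ≤ pt x y' hb) (hac : pt x y ha ≤ pt x' y hc)
    (hbd : pt x y' hb ≤ pt x' y' hd) (hcd : pt x' y hc ≤ pt x' y' hd)
    (mb : M.V (pt x y' hb)) (mc : M.V (pt x' y hc)) (h : M.map hbd mb = M.map hcd mc) :
    ∃ ma : M.V (pt x y ha), M.map hab ma = mb ∧ M.map hac ma = mc :=
  hme x x' y y' hac.1 hab.2 ha hb hc hd mb mc h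

/-- move right -/
def rgt (p : ↥upperT) (x : ℝ) : ↥upperT :=
  ⟨(max p.1.1 x, p.1.2), by
    have h1 : 0 < p.1.1 + p.1.2 := p.2
    have h2 := le_max_left p.1.1 x
    show 0 < max p.1.1 x + p.1.2
    linarith⟩

/-- move up -/
def upw (p : ↥upperT) (y : ℝ) : ↥upperT :=
  ⟨(p.1.1, max p.1.2 y), by
    have h1 : 0 < p.1.1 + p.1.2 := p.2
    have h2 := le_max_left p.1.2 y
    show 0 < p.1.1 + max p.1.2 y
    linarith⟩

theorem le_rgt (p : ↥upperT) (x : ℝ) : p ≤ rgt p x := ⟨le_max_left _ _, le_rfl⟩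
theorem le_upw (p : ↥upperT) (y : ℝ) : p ≤ upw p y := ⟨le_rfl, le_max_left _ _⟩

theorem rgt_le {p q : ↥upperT} {x : ℝ} (h : p ≤ q) (hx : x ≤ q.1.1) : rgt p x ≤ q :=
  ⟨max_le h.1 hx, h.2⟩
theorem upw_le {p q : ↥upperT} {y : ℝ} (h : p ≤ q) (hy : y ≤ q.1.2) : upw p y ≤ q :=
  ⟨h.1, max_le h.2 hy⟩

/-- horizontal kernel -/
def Hk (M : PersistenceModule k ↥upperT) (p : ↥upperT) (x : ℝ) : Submodule k (M.V p) :=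
  LinearMap.ker (M.map (le_rgt p x))

/-- vertical kernel -/
def Vk (M : PersistenceModule k ↥upperT) (p : ↥upperT) (y : ℝ) : Submodule k (M.V p) :=
  LinearMap.ker (M.map (le_upw p y))

variable (M : PersistenceModule k ↥upperT)

theorem zero_of_le {p q r : ↥upperT} (h : p ≤ q) (h' : q ≤ r) {v : M.V p} (hv : M.map h v = 0) :
    M.map (h.trans h') v = 0 := by
  rw [← map_map M h h', hv, map_zero]

theorem Hk_mono (p : ↥upperT) : Monotone (Hk M p) := fun x x' h v hv =>
  zero_of_le M (le_rgt p x) (show rgt p x ≤ rgt p x' from ⟨max_le_max le_rfl h, le_rfl⟩) hv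

theorem Vk_mono (p : ↥upperT) : Monotone (Vk M p) := fun x x' h v hv =>
  zero_of_le M (le_upw p x) (show upw p x ≤ upw p x' from ⟨le_rfl, max_le_max le_rfl h⟩) hv

theorem Hk_zero {p q : ↥upperT} (h : p ≤ q) {x : ℝ} (hx : x ≤ q.1.1) {v : M.V p}
    (hv : v ∈ Hk M p x) : M.map h v = 0 :=
  zero_of_le M (le_rgt p x) (rgt_le h hx) hv

theorem Vk_zero {p q : ↥upperT} (h : p ≤ q) {y : ℝ} (hy : y ≤ q.1.2) {v : M.V p}
    (hv : v ∈ Vk M p y) : M.map h v = 0 :=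
  zero_of_le M (le_upw p y) (upw_le h hy) hv

theorem mem_Hk {p q : ↥upperT} (h : p ≤ q) (hq : q.1.2 = p.1.2) {x : ℝ} (hx : q.1.1 ≤ max p.1.1 x)
    {v : M.V p} (hv : M.map h v = 0) : v ∈ Hk M p x :=
  zero_of_le M h (show q ≤ rgt p x from ⟨hx, hq.le⟩) hv

theorem mem_Vk {p q : ↥upperT} (h : p ≤ q) (hq : q.1.1 = p.1.1) {y : ℝ} (hy : q.1.2 ≤ max p.1.2 y)
    {v : M.V p} (hv : M.map h v = 0) : v ∈ Vk M p y :=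
  zero_of_le M h (show q ≤ upw p y from ⟨hq.le, hy⟩) hv

theorem Hk_self (p : ↥upperT) : Hk M p p.1.1 = ⊥ := by
  rw [eq_bot_iff]
  intro v hv
  have := Hk_zero M (le_refl p) le_rfl hv
  rwa [map_id] at this

theorem Vk_self (p : ↥upperT) : Vk M p p.1.2 = ⊥ := by
  rw [eq_bot_iff]
  intro v hv
  have := Vk_zero M (le_refl p) le_rfl hv
  rwa [map_id] at this

/-- elements which die vertically -/
def Vinf (p : ↥upperT) : Submodule k (M.V p) := ⨆ y, Vk M p y

theorem mem_Vinf {p : ↥upperT} {v : M.V p} : v ∈ Vinf M p ↔ ∃ y, v ∈ Vk M p y :=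
  Submodule.mem_iSup_of_directed _ (Vk_mono M p).directed_le

theorem fill_grid (hme : MiddleExactSub upperT M) (JS JT : Set ℝ) (hJS : IsIdeal JS)
    (hJT : IsIdeal JT) (p : ↥upperT) (m : M.V p)
    (hm : ∀ q (h : p ≤ q), q.1 ∉ JS ×ˢ JT → M.map h m = 0) (xa ya : ℝ) (hxa : xa ∉ JS)
    (hya : ya ∉ JT) (F : Finset ↥upperT) :
    ∃ s, GoodOn M {q : ↥upperT | q.1 ∈ JS ×ˢ JT} p m F s := by
  classical
  set J' : Set ↥upperT := {q : ↥upperT | q.1 ∈ JS ×ˢ JT} with hJ'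
  have hJ'id : ∀ q q' : ↥upperT, q ≤ q' → q' ∈ J' → q ∈ J' := fun q q' h h' =>
    ⟨hJS _ _ h.1 h'.1, hJT _ _ h.2 h'.2⟩
  let X : Finset ℝ := insert xa (insert p.1.1 (F.image fun q => q.1.1))
  let Y : Finset ℝ := insert ya (insert p.1.2 (F.image fun q => q.1.2))
  let G : Finset ↥upperT := (X ×ˢ Y).subtype (· ∈ upperT)
  have hG : ∀ q : ↥upperT, q ∈ G ↔ q.1.1 ∈ X ∧ q.1.2 ∈ Y := by
    intro q
    simp [G, Finset.mem_subtype]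
  have hpG : p ∈ G := (hG p).2 (by simp [X, Y])
  have hFG : F ⊆ G := fun q hq => (hG q).2
    ⟨Finset.mem_insert_of_mem (Finset.mem_insert_of_mem (Finset.mem_image_of_mem _ hq)),
     Finset.mem_insert_of_mem (Finset.mem_insert_of_mem (Finset.mem_image_of_mem _ hq))⟩
  suffices H : ∀ (n : ℕ) (U : Finset ↥upperT) (s : ∀ q, M.V q), (G \ U).card = n → U ⊆ G → p ∈ U →
      (∀ q ∈ G, q ∉ J' → q ∈ U) → (∀ q ∈ U, ∀ q' ∈ G, q ≤ q' → q' ∈ U) →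
      (∀ q ∈ U, ∀ q' ∈ U, ∀ h : q ≤ q', M.map h (s q) = s q') → (∀ q ∈ U, q ∉ J' → s q = 0) →
      s p = m → ∃ s, GoodOn M J' p m G s by
    obtain ⟨s, hs⟩ := H _ (G.filter fun q => p ≤ q ∨ q ∉ J')
      (fun q => if h : p ≤ q then M.map h m else 0) rfl (Finset.filter_subset _ _)
      (by simp [hpG]) (by simp +contextual)
      (by
        intro q hq q' hq' h
        simp only [Finset.mem_filter] at hq ⊢
        refine ⟨hq', ?_⟩
        rcases hq.2 with h1 | h1
        · exact Or.inl (h1.trans h)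
        · exact Or.inr fun h2 => h1 (hJ'id _ _ h h2))
      (by
        intro q hq q' hq' h
        simp only [Finset.mem_filter] at hq hq'
        by_cases h1 : p ≤ q
        · rw [dif_pos h1, dif_pos (h1.trans h), map_map]
        · rw [dif_neg h1, map_zero]
          have h2 : q' ∉ J' := fun h2 => (hq.2.resolve_left h1) (hJ'id _ _ h h2)
          split_ifs with h3
          · exact (hm q' h3 h2).symm
          · rfl)
      (by
        intro q hq h2
        split_ifs with h3
        · exact hm q h3 h2
        · rfl)
      (by simp [map_id])
    exact ⟨s, hs.mono hFG⟩
  intro n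
  induction n with
  | zero =>
    intro U s hcard hUG hpU _ _ h3 h4 h5
    have hGU : G ⊆ U := by
      rw [Finset.card_eq_zero, Finset.sdiff_eq_empty_iff_subset] at hcard
      exact hcard
    exact ⟨s, fun q hq q' hq' h _ => h3 q (hGU hq) q' (hGU hq') h,
      fun q hq => h4 q (hGU hq), fun _ => h5⟩
  | succ n ih =>
    intro U s hcard hUG hpU h1 h2 h3 h4 h5
    have hne : (G \ U).Nonempty := by
      rw [← Finset.card_pos]; omega
    obtain ⟨q, hq⟩ := Finset.exists_maximal hne
    obtain ⟨hqm, hqmax⟩ := hq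
    have hqG := (Finset.mem_sdiff.1 hqm).1
    have hqU := (Finset.mem_sdiff.1 hqm).2
    have hmaxU : ∀ g ∈ G, q ≤ g → g ≠ q → g ∈ U := by
      intro g hg hqg hne
      by_contra hgU
      exact hne (le_antisymm (hqmax (Finset.mem_sdiff.2 ⟨hg, hgU⟩) hqg) hqg)
    have hqJ : q ∈ J' := by
      by_contra hqJ
      exact hqU (h1 q hqG hqJ)
    have hxq : q.1.1 < xa := by
      by_contra hcon
      exact hxa (hJS _ _ (not_lt.1 hcon) hqJ.1)
    have hyq : q.1.2 < ya := by
      by_contra hcon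
      exact hya (hJT _ _ (not_lt.1 hcon) hqJ.2)
    obtain ⟨x1, hx1X, hx1, hx1min⟩ : ∃ x1 ∈ X, q.1.1 < x1 ∧ ∀ x ∈ X, q.1.1 < x → x1 ≤ x := by
      have hne : (X.filter fun x => q.1.1 < x).Nonempty := ⟨xa, by simp [X, hxq]⟩
      obtain ⟨x1, hx1, hmin⟩ := Finset.exists_min_image _ id hne
      rw [Finset.mem_filter] at hx1
      exact ⟨x1, hx1.1, hx1.2, fun x hx hx' => hmin x (Finset.mem_filter.2 ⟨hx, hx'⟩)⟩
    obtain ⟨y1, hy1Y, hy1, hy1min⟩ : ∃ y1 ∈ Y, q.1.2 < y1 ∧ ∀ y ∈ Y, q.1.2 < y → y1 ≤ y := by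
      have hne : (Y.filter fun y => q.1.2 < y).Nonempty := ⟨ya, by simp [Y, hyq]⟩
      obtain ⟨y1, hy1, hmin⟩ := Finset.exists_min_image _ id hne
      rw [Finset.mem_filter] at hy1
      exact ⟨y1, hy1.1, hy1.2, fun y hy hy' => hmin y (Finset.mem_filter.2 ⟨hy, hy'⟩)⟩
    obtain ⟨⟨x, y⟩, hxy⟩ := q
    have hxy' : 0 < x + y := hxy
    simp only at hx1 hy1 hx1min hy1min
    have hxyG := (hG _).1 hqG
    simp only at hxyG
    have hr : 0 < x1 + y := by linarith
    have hu : 0 < x + y1 := by linarith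
    have hd : 0 < x1 + y1 := by linarith
    have hrU : pt x1 y hr ∈ U := hmaxU _ ((hG _).2 ⟨hx1X, hxyG.2⟩) ⟨hx1.le, le_rfl⟩
      (fun h => hx1.ne' (congrArg (fun q => q.1.1) h))
    have huU : pt x y1 hu ∈ U := hmaxU _ ((hG _).2 ⟨hxyG.1, hy1Y⟩) ⟨le_rfl, hy1.le⟩
      (fun h => hy1.ne' (congrArg (fun q => q.1.2) h))
    have hdU : pt x1 y1 hd ∈ U := hmaxU _ ((hG _).2 ⟨hx1X, hy1Y⟩) ⟨hx1.le, hy1.le⟩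
      (fun h => hx1.ne' (congrArg (fun q => q.1.1) h))
    obtain ⟨t, ht1, ht2⟩ := me hme (ha := hxy') (hb := hu) (hc := hr) (hd := hd)
      (pt_le le_rfl hy1.le) (pt_le hx1.le le_rfl) (pt_le hx1.le le_rfl) (pt_le le_rfl hy1.le)
      (s _) (s _) (by rw [h3 _ huU _ hdU, h3 _ hrU _ hdU])
    have hkey : ∀ b ∈ U, ∀ h : pt x y hxy' ≤ b, M.map h t = s b := by
      intro b hbU h
      have hbG : b ∈ G := hUG hbU
      · have hb' := (hG _).1 hbG
        rcases h.1.lt_or_eq with hlt | heq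
        · have hle : pt x1 y hr ≤ b := ⟨hx1min _ hb'.1 hlt, h.2⟩
          rw [← h3 _ hrU _ hbU hle, ← ht2, map_map]
        · rcases h.2.lt_or_eq with hlt | heq'
          · have hle : pt x y1 hu ≤ b := ⟨h.1, hy1min _ hb'.2 hlt⟩
            rw [← h3 _ huU _ hbU hle, ← ht1, map_map]
          · exact absurd (show (⟨(x, y), hxy⟩ : ↥upperT) ∈ U by
              have : b = ⟨(x, y), hxy⟩ := Subtype.ext (Prod.ext heq.symm heq'.symm)
              rwa [← this]) hqU
    have hupd : ∀ b ∈ U, Function.update s ⟨(x, y), hxy⟩ t b = s b := fun b hb =>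
      Function.update_of_ne (fun h : b = ⟨(x, y), hxy⟩ => hqU (h ▸ hb)) _ _
    refine ih (insert ⟨(x, y), hxy⟩ U) (Function.update s ⟨(x, y), hxy⟩ t) ?_ ?_ ?_ ?_ ?_ ?_ ?_ ?_
    · rw [Finset.sdiff_insert, Finset.card_erase_of_mem hqm, hcard]
      rfl
    · exact Finset.insert_subset hqG hUG
    · exact Finset.mem_insert_of_mem hpU
    · exact fun q hq hqJ => Finset.mem_insert_of_mem (h1 q hq hqJ)
    · intro a ha b hb hab
      rcases Finset.mem_insert.1 ha with rfl | ha
      · by_cases hb' : b = ⟨(x, y), hxy⟩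
        · exact hb' ▸ Finset.mem_insert_self _ _
        · exact Finset.mem_insert_of_mem (hmaxU b hb hab hb')
      · exact Finset.mem_insert_of_mem (h2 a ha b hb hab)
    · intro a ha b hb hab
      rcases Finset.mem_insert.1 ha with rfl | ha
      · rcases Finset.mem_insert.1 hb with rfl | hb
        · rw [map_id]
        · rw [Function.update_self, hupd b hb]
          exact hkey b hb hab
      · rcases Finset.mem_insert.1 hb with rfl | hb
        · exact absurd (h2 a ha _ hqG hab) hqU
        · rw [hupd a ha, hupd b hb]
          exact h3 a ha b hb hab
    · intro a ha haJ
      rcases Finset.mem_insert.1 ha with rfl | ha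
      · exact absurd hqJ haJ
      · rw [hupd a ha]
        exact h4 a ha haJ
    · rw [hupd p hpU, h5]

theorem case1 (hfd : ∀ p, FiniteDimensional k (M.V p)) (hme : MiddleExactSub upperT M)
    (p : ↥upperT) (m0 : M.V p) (hm0 : m0 ≠ 0) (x1 y1 : ℝ) (hx1 : m0 ∈ Hk M p x1)
    (hy1 : m0 ∈ Vk M p y1) :
    ∃ J : Set (ℝ × ℝ), IsBlock J ∧ {q : ↥upperT | q.1 ∈ J}.Nonempty ∧
      HasSummand M {q : ↥upperT | q.1 ∈ J} := by
  have := hfd p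
  obtain ⟨A, ⟨xa, rfl⟩, hA0, hAmin⟩ := exists_min (Set.range fun x => Hk M p x ⊓ Vinf M p)
    ⟨_, ⟨x1, rfl⟩, fun h => hm0 (by
      have : m0 ∈ Hk M p x1 ⊓ Vinf M p := ⟨hx1, (mem_Vinf M).2 ⟨y1, hy1⟩⟩
      simp only at h
      rw [h] at this; simpa using this)⟩
    (by
      rintro _ ⟨a, rfl⟩ _ ⟨b, rfl⟩
      rcases le_total a b with h | h
      · exact Or.inl (inf_le_inf_right _ (Hk_mono M p h))
      · exact Or.inr (inf_le_inf_right _ (Hk_mono M p h)))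
  simp only at hA0 hAmin
  set A := Hk M p xa ⊓ Vinf M p with hA
  obtain ⟨B, ⟨ya, rfl⟩, hB0, hBmin⟩ := exists_min (Set.range fun y => A ⊓ Vk M p y)
    (by
      obtain ⟨v, hv, hv0⟩ := Submodule.exists_mem_ne_zero_of_ne_bot hA0
      obtain ⟨y, hy⟩ := (mem_Vinf M).1 hv.2
      refine ⟨_, ⟨y, rfl⟩, fun h => hv0 ?_⟩
      have : v ∈ A ⊓ Vk M p y := ⟨hv, hy⟩
      simp only at h
      rw [h] at this; simpa using this)
    (by
      rintro _ ⟨a, rfl⟩ _ ⟨b, rfl⟩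
      rcases le_total a b with h | h
      · exact Or.inl (inf_le_inf_left _ (Vk_mono M p h))
      · exact Or.inr (inf_le_inf_left _ (Vk_mono M p h)))
  simp only at hB0 hBmin
  obtain ⟨m, hmB, hm⟩ := Submodule.exists_mem_ne_zero_of_ne_bot hB0
  let JS : Set ℝ := {x | Hk M p x ⊓ Vinf M p = ⊥}
  let JT : Set ℝ := {y | A ⊓ Vk M p y = ⊥}
  have hJS : IsIdeal JS := fun x x' h h' =>
    le_bot_iff.1 ((inf_le_inf_right _ (Hk_mono M p h)).trans h'.le)
  have hJT : IsIdeal JT := fun x x' h h' =>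
    le_bot_iff.1 ((inf_le_inf_left _ (Vk_mono M p h)).trans h'.le)
  have hpS : p.1.1 ∈ JS := by simp [JS, Hk_self]
  have hpT : p.1.2 ∈ JT := by simp [JT, Vk_self]
  have hmS : ∀ x, x ∉ JS → m ∈ Hk M p x := fun x hx => (hAmin _ ⟨x, rfl⟩ hx hmB.1).1
  have hmT : ∀ y, y ∉ JT → m ∈ Vk M p y := fun y hy => (hBmin _ ⟨y, rfl⟩ hy hmB).2
  have hout : ∀ q (h : p ≤ q), q.1 ∉ JS ×ˢ JT → M.map h m = 0 := by
    intro q h hq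
    by_cases h1 : q.1.1 ∈ JS
    · exact Vk_zero M h le_rfl (hmT _ fun h2 => hq ⟨h1, h2⟩)
    · exact Hk_zero M h le_rfl (hmS _ h1)
  have hin : ∀ q (h : p ≤ q), q.1 ∈ JS ×ˢ JT → M.map h m ≠ 0 := by
    intro q h hq h0
    obtain ⟨⟨x0, y0⟩, h00⟩ := p
    obtain ⟨⟨x, y⟩, hxy⟩ := q
    have h00' : 0 < x0 + y0 := h00
    have hx : x0 ≤ x := h.1
    have hy : y0 ≤ y := h.2
    have hb : 0 < x0 + y := by linarith
    have hc : 0 < x + y0 := by linarith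
    obtain ⟨ma, ha1, ha2⟩ := me hme (ha := h00') (hb := hb) (hc := hc) (hd := hxy)
      (pt_le le_rfl hy) (pt_le hx le_rfl) (pt_le hx le_rfl) (pt_le le_rfl hy) 0
      (M.map (pt_le hx le_rfl) m) (by rw [map_zero, map_map]; exact h0.symm)
    have hma : ma ∈ Vk M ⟨(x0, y0), h00⟩ y := 
      mem_Vk M (q := pt x0 y hb) (pt_le le_rfl hy) rfl (le_max_right _ _) ha1
    have hsub : m - ma ∈ Hk M ⟨(x0, y0), h00⟩ x ⊓ Vinf M ⟨(x0, y0), h00⟩ := by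
      refine ⟨mem_Hk M (q := pt x y0 hc) (pt_le hx le_rfl) rfl (le_max_right _ _) ?_, ?_⟩
      · rw [map_sub, ha2, sub_self]
      · exact Submodule.sub_mem _ hmB.1.2 ((mem_Vinf M).2 ⟨y, hma⟩)
    have h1 : Hk M ⟨(x0, y0), h00⟩ x ⊓ Vinf M ⟨(x0, y0), h00⟩ = ⊥ := hq.1
    rw [h1, Submodule.mem_bot, sub_eq_zero] at hsub
    have h2 : A ⊓ Vk M ⟨(x0, y0), h00⟩ y = ⊥ := hq.2
    have h3 : m ∈ A ⊓ Vk M ⟨(x0, y0), h00⟩ y := ⟨hmB.1, hsub ▸ hma⟩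
    rw [h2] at h3
    exact hm (by simpa using h3)
  have hpJ : p.1 ∈ JS ×ˢ JT := ⟨hpS, hpT⟩
  refine ⟨JS ×ˢ JT, ⟨⟨_, hpJ⟩, Or.inl ⟨JS, JT, ⟨⟨_, hpS⟩, hJS.isConvex⟩, hJS,
    ⟨⟨_, hpT⟩, hJT.isConvex⟩, hJT, rfl⟩⟩, ⟨p, hpJ⟩, ?_⟩
  obtain ⟨s, hs1, hs2, hs3⟩ := exists_section M hfd _ p m
    (fill_grid M hme JS JT hJS hJT p m hout xa ya hA0 hB0)
  have hjoin : ∀ q ∈ {q : ↥upperT | q.1 ∈ JS ×ˢ JT}, ∀ q' ∈ {q : ↥upperT | q.1 ∈ JS ×ˢ JT},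
      ∃ r ∈ {q : ↥upperT | q.1 ∈ JS ×ˢ JT}, q ≤ r ∧ q' ≤ r := by
    intro q hq q' hq'
    refine ⟨upw (rgt q q'.1.1) q'.1.2, ⟨?_, ?_⟩, (le_rgt _ _).trans (le_upw _ _),
      ⟨le_max_right _ _, le_max_right _ _⟩⟩
    · rcases max_choice q.1.1 q'.1.1 with h | h
      · show max q.1.1 q'.1.1 ∈ JS
        rw [h]; exact hq.1
      · show max q.1.1 q'.1.1 ∈ JS
        rw [h]; exact hq'.1
    · rcases max_choice q.1.2 q'.1.2 with h | h
      · show max q.1.2 q'.1.2 ∈ JT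
        rw [h]; exact hq.2
      · show max q.1.2 q'.1.2 ∈ JT
        rw [h]; exact hq'.2
  refine exists_cosection M _ ⟨p, hpJ⟩ hjoin s hs1 hs2 (fun _ => ⊥) ?_ ?_ ?_
  · intro q q' h _ _ v hv
    rw [Submodule.mem_bot] at hv ⊢
    rw [hv, map_zero]
  · intro q q' h hq hq'
    exact absurd ⟨hJS _ _ h.1 hq'.1, hJT _ _ h.2 hq'.2⟩ hq
  · intro q hq h0
    rw [Submodule.mem_bot] at h0
    obtain ⟨r, hr, h1, h2⟩ := hjoin q hq p hpJ
    apply hin r h2 hr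
    rw [← hs3, hs1 p r h2 hpJ, ← hs1 q r h1 hq, h0, map_zero]

end Triangle
end PMod

namespace PMod

section Strip

variable {k : Type} [Field k] (M : PersistenceModule k ↥upperT)

theorem upper_pos (p : ↥upperT) : 0 < p.1.1 + p.1.2 := p.2

theorem Hk_map {p q : ↥upperT} (h : p ≤ q) {x : ℝ} {v : M.V p} (hv : v ∈ Hk M p x) :
    M.map h v ∈ Hk M q x := by
  show M.map (le_rgt q x) (M.map h v) = 0
  rw [map_map]
  exact Hk_zero M _ (le_max_right _ _) hv

/-- Elements of `D` which eventually (going up) come from horizontal coordinate `≤ x`. -/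
def Eh (p : ↥upperT) (D : Submodule k (M.V p)) (x : ℝ) : Submodule k (M.V p) where
  carrier := {d | d ∈ D ∧ ∃ (a b : ↥upperT) (e : M.V a) (hab : a ≤ b) (hpb : p ≤ b),
    a.1.1 ≤ x ∧ b.1.1 = p.1.1 ∧ M.map hab e = M.map hpb d}
  zero_mem' := by
    refine ⟨D.zero_mem, pt (min p.1.1 x) (max p.1.2 (1 - min p.1.1 x)) ?_,
      pt p.1.1 (max p.1.2 (1 - min p.1.1 x)) ?_, 0, ⟨min_le_left _ _, le_rfl⟩,
      ⟨le_rfl, le_max_left _ _⟩, min_le_right _ _, rfl, by simp⟩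
    · have := le_max_right p.1.2 (1 - min p.1.1 x)
      linarith
    · have := le_max_left p.1.2 (1 - min p.1.1 x)
      have := upper_pos p
      linarith
  smul_mem' := by
    rintro c d ⟨hd, a, b, e, hab, hpb, h1, h2, h3⟩
    exact ⟨D.smul_mem c hd, a, b, c • e, hab, hpb, h1, h2, by rw [map_smul, map_smul, h3]⟩
  add_mem' := by
    rintro d d' ⟨hd, a, b, e, hab, hpb, h1, h2, h3⟩ ⟨hd', a', b', e', hab', hpb', h1', h2', h3'⟩
    have hy := le_max_left b.1.2 b'.1.2
    have hy' := le_max_right b.1.2 b'.1.2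
    have hx := le_max_left a.1.1 a'.1.1
    have hx' := le_max_right a.1.1 a'.1.1
    have hA : 0 < max a.1.1 a'.1.1 + max b.1.2 b'.1.2 := by
      have := upper_pos a
      have := hab.2
      linarith
    have hB : 0 < p.1.1 + max b.1.2 b'.1.2 := by
      have := upper_pos b
      linarith
    let a2 := pt _ _ hA
    let b2 := pt _ _ hB
    have haa : a ≤ a2 := ⟨hx, hab.2.trans hy⟩
    have haa' : a' ≤ a2 := ⟨hx', hab'.2.trans hy'⟩
    have hbb : b ≤ b2 := ⟨h2.le, hy⟩
    have hbb' : b' ≤ b2 := ⟨h2'.le, hy'⟩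
    have hab2 : a2 ≤ b2 := ⟨max_le (hab.1.trans h2.le) (hab'.1.trans h2'.le), le_rfl⟩
    refine ⟨D.add_mem hd hd', a2, b2, M.map haa e + M.map haa' e', hab2, hpb.trans hbb,
      max_le h1 h1', rfl, ?_⟩
    rw [map_add, map_add, map_map, map_map, ← map_map M hab hbb, h3, ← map_map M hab' hbb', h3',
      map_map, map_map]

theorem Eh_mono (p : ↥upperT) (D : Submodule k (M.V p)) : Monotone (Eh M p D) := by
  rintro x x' h d ⟨hd, a, b, e, hab, hpb, h1, h2⟩
  exact ⟨hd, a, b, e, hab, hpb, h1.trans h, h2⟩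

theorem Eh_self (p : ↥upperT) (D : Submodule k (M.V p)) {x : ℝ} (hx : p.1.1 ≤ x) :
    Eh M p D x = D :=
  le_antisymm (fun _ h => h.1) fun d hd => ⟨hd, p, p, d, le_rfl, le_rfl, hx, rfl, rfl⟩

theorem case2 (hfd : ∀ p, FiniteDimensional k (M.V p)) (hme : MiddleExactSub upperT M)
    (hK : ∀ p x y (v : M.V p), v ∈ Hk M p x → v ∈ Vk M p y → v = 0)
    (p : ↥upperT) (m0 : M.V p) (hm0 : m0 ≠ 0) (x1 : ℝ) (hx1 : m0 ∈ Hk M p x1) :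
    ∃ JS : Set ℝ, IsIntervalLin JS ∧ {q : ↥upperT | q.1.1 ∈ JS}.Nonempty ∧
      HasSummand M {q : ↥upperT | q.1.1 ∈ JS} := by
  classical
  have := hfd p
  obtain ⟨D, ⟨xa, hDdef⟩, hD0, hDmin⟩ := exists_min (Set.range fun x => Hk M p x)
    ⟨_, ⟨x1, rfl⟩, fun h => hm0 (by
      simp only at h
      rw [h] at hx1; simpa using hx1)⟩
    (by
      rintro _ ⟨a, rfl⟩ _ ⟨b, rfl⟩
      rcases le_total a b with h | h
      · exact Or.inl (Hk_mono M p h)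
      · exact Or.inr (Hk_mono M p h))
  simp only at hDdef
  obtain ⟨E, ⟨xe, hEdef⟩, hE0, hEmin⟩ := exists_min (Set.range fun x => Eh M p D x)
    ⟨_, ⟨p.1.1, rfl⟩, by simpa only [Eh_self M p D le_rfl] using hD0⟩
    (by
      rintro _ ⟨a, rfl⟩ _ ⟨b, rfl⟩
      rcases le_total a b with h | h
      · exact Or.inl (Eh_mono M p D h)
      · exact Or.inr (Eh_mono M p D h))
  obtain ⟨m, hmE, hm⟩ := Submodule.exists_mem_ne_zero_of_ne_bot hE0
  have hmD : m ∈ D := by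
    have : m ∈ Eh M p D xe := by rw [← hEdef] at hmE; exact hmE
    exact this.1
  have hmH : m ∈ Hk M p xa := hDdef ▸ hmD
  let JS : Set ℝ := {x | Eh M p D x ≠ ⊥ ∧ Hk M p x = ⊥}
  have hpS : p.1.1 ∈ JS := ⟨by rwa [Eh_self M p D le_rfl], Hk_self M p⟩
  have hconv : IsConvex JS := fun u v w huv hvw hu hw =>
    ⟨fun h => hu.1 (le_bot_iff.1 ((Eh_mono M p D huv).trans h.le)),
     le_bot_iff.1 ((Hk_mono M p hvw).trans hw.2.le)⟩
  refine ⟨JS, ⟨⟨_, hpS⟩, hconv⟩, ⟨p, hpS⟩, ?_⟩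
  set J' : Set ↥upperT := {q : ↥upperT | q.1.1 ∈ JS} with hJ'
  have hinj : ∀ (r b : ↥upperT), r.1.1 ∈ JS → p ≤ b → ∀ hbr : b ≤ r, b.1.1 = p.1.1 →
      b.1.2 = r.1.2 → ∀ w : M.V b, M.map hbr w = 0 → w = 0 := by
    intro r b hr hpb hbr hb1 hb2 w hw
    obtain ⟨⟨x0, y0⟩, h00⟩ := p
    obtain ⟨⟨x, y⟩, hxy⟩ := r
    obtain ⟨⟨x', y'⟩, hxy'⟩ := b
    simp only at hb1 hb2
    subst hb1 hb2
    have hx : x' ≤ x := hbr.1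
    have hy : y0 ≤ y' := hpb.2
    have h00' : 0 < x' + y0 := h00
    have hc : 0 < x + y0 := by linarith
    obtain ⟨ma, ha1, ha2⟩ := me hme (ha := h00') (hb := hxy') (hc := hc) (hd := hxy)
      (pt_le le_rfl hy) (pt_le hx le_rfl) (pt_le hx le_rfl) (pt_le le_rfl hy) w 0
      (by rw [map_zero]; exact hw)
    have h1 : ma ∈ Hk M ⟨(x', y0), h00⟩ x :=
      mem_Hk M (q := pt x y0 hc) (pt_le hx le_rfl) rfl (le_max_right _ _) ha2
    have h2 : Hk M ⟨(x', y0), h00⟩ x = ⊥ := hr.2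
    rw [h2, Submodule.mem_bot] at h1
    rw [← ha1, h1, map_zero]
  have hsec : ∀ F : Finset ↥upperT, ∃ s, GoodOn M J' p m F s := by
    intro F
    obtain ⟨u, hu, humin⟩ : ∃ u ∈ JS, ∀ q ∈ F, q ∈ J' → u ≤ q.1.1 := by
      obtain ⟨u, hu, hmin⟩ := Finset.exists_min_image
        (insert p.1.1 ((F.filter (· ∈ J')).image fun q => q.1.1)) id ⟨_, Finset.mem_insert_self _ _⟩
      refine ⟨u, ?_, fun q hq hqJ => hmin _ (Finset.mem_insert_of_mem
        (Finset.mem_image_of_mem _ (Finset.mem_filter.2 ⟨hq, hqJ⟩)))⟩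
      rcases Finset.mem_insert.1 hu with rfl | hu
      · exact hpS
      · obtain ⟨q, hq, rfl⟩ := Finset.mem_image.1 hu
        exact (Finset.mem_filter.1 hq).2
    obtain ⟨-, a, b, e, hab, hpb, hau, hbx, he⟩ := hEmin _ ⟨u, rfl⟩ hu.1 hmE
    let Gd : ∀ q : ↥upperT, M.V q → Prop := fun q t =>
      (∃ (r : ↥upperT) (h1 : q ≤ r) (h2 : a ≤ r), r.1.1 = q.1.1 ∧ M.map h1 t = M.map h2 e) ∧
        ∃ x, t ∈ Hk M q x
    have huniq : ∀ q t t', Gd q t → Gd q t' → t = t' := by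
      rintro q t t' ⟨⟨r, h1, h2, h3, h4⟩, x, hx⟩ ⟨⟨r', h1', h2', h3', h4'⟩, x', hx'⟩
      rw [← sub_eq_zero]
      apply hK q (max x x') (max r.1.2 r'.1.2)
      · exact Submodule.sub_mem _ (Hk_mono M q (le_max_left _ _) hx)
          (Hk_mono M q (le_max_right _ _) hx')
      · have hr : r ≤ upw r r'.1.2 := le_upw _ _
        have hr' : r' ≤ upw r r'.1.2 := ⟨(h3'.trans h3.symm).le, le_max_right _ _⟩
        refine mem_Vk M (q := upw r r'.1.2) (h1.trans hr) h3 (le_max_right _ _) ?_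
        rw [map_sub, sub_eq_zero, ← map_map M h1 hr, h4, ← map_map M h1' hr', h4', map_map,
          map_map]
    have hex : ∀ q : ↥upperT, a.1.1 ≤ q.1.1 → ∃ t, Gd q t := by
      intro q haq
      obtain ⟨⟨x, v⟩, hxv⟩ := q
      have hxv' : 0 < x + v := hxv
      let Y := max v b.1.2
      let W := max x (max p.1.1 xa)
      have hY : v ≤ Y := le_max_left _ _
      have hW : x ≤ W := le_max_left _ _
      have hxY : 0 < x + Y := by linarith
      have hWv : 0 < W + v := by linarith
      have hWY : 0 < W + Y := by linarith
      have har : a ≤ pt x Y hxY := ⟨haq, hab.2.trans (le_max_right _ _)⟩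
      have hbt : b ≤ pt W Y hWY :=
        ⟨hbx.le.trans ((le_max_left _ _).trans (le_max_right _ _)), le_max_right _ _⟩
      have hz : M.map (hab.trans hbt) e = 0 := by
        rw [← map_map M hab hbt, he, map_map]
        exact Hk_zero M _ ((le_max_right _ _).trans (le_max_right _ _)) hmH
      obtain ⟨t, ht1, ht2⟩ := me hme (ha := hxv') (hb := hxY) (hc := hWv) (hd := hWY)
        (pt_le le_rfl hY) (pt_le hW le_rfl) (pt_le hW le_rfl) (pt_le le_rfl hY) (M.map har e) 0
        (by rw [map_zero, map_map]; exact hz)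
      exact ⟨t, ⟨pt x Y hxY, pt_le le_rfl hY, har, rfl, ht1⟩, W,
        mem_Hk M (q := pt W v hWv) (pt_le hW le_rfl) rfl (le_max_right _ _) ht2⟩
    have hpush : ∀ q q' (h : q ≤ q') t, Gd q t → Gd q' (M.map h t) := by
      rintro q q' h t ⟨⟨r, h1, h2, h3, h4⟩, x, hx⟩
      refine ⟨?_, x, Hk_map M h hx⟩
      have hr : r ≤ upw q' r.1.2 := ⟨h3.le.trans h.1, le_max_right _ _⟩
      refine ⟨upw q' r.1.2, le_upw _ _, h2.trans hr, rfl, ?_⟩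
      rw [map_map, ← map_map M h2 hr, ← h4, map_map]
    have hzero : ∀ q : ↥upperT, a.1.1 ≤ q.1.1 → u ≤ q.1.1 → q ∉ J' → Gd q 0 := by
      intro q haq huq hq
      refine ⟨?_, 0, Submodule.zero_mem _⟩
      have h1 : Eh M p D q.1.1 ≠ ⊥ := fun h =>
        hu.1 (le_bot_iff.1 ((Eh_mono M p D huq).trans h.le))
      have h2 : Hk M p q.1.1 ≠ ⊥ := fun h => hq ⟨h1, h⟩
      have h3 : m ∈ Hk M p q.1.1 := hDmin _ ⟨_, rfl⟩ h2 hmD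
      have h4 : p.1.1 ≤ q.1.1 := by
        by_contra hcon
        exact h2 (le_bot_iff.1 ((Hk_mono M p (not_le.1 hcon).le).trans (Hk_self M p).le))
      have hb : b ≤ upw q b.1.2 := ⟨hbx.le.trans h4, le_max_right _ _⟩
      refine ⟨upw q b.1.2, le_upw _ _, hab.trans hb, rfl, ?_⟩
      rw [map_zero, ← map_map M hab hb, he, map_map]
      exact (Hk_zero M (hpb.trans hb) (q := upw q b.1.2) le_rfl h3).symm
    let s : ∀ q, M.V q := fun q =>
      if h : q ∈ J' ∧ a.1.1 ≤ q.1.1 then (hex q h.2).choose else 0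
    have hsG : ∀ q ∈ J', a.1.1 ≤ q.1.1 → Gd q (s q) := by
      intro q h1 h2
      simp only [s, dif_pos (And.intro h1 h2)]
      exact (hex q h2).choose_spec
    have hs0 : ∀ q, q ∉ J' → s q = 0 := by
      intro q hq
      simp only [s]
      rw [dif_neg]
      exact fun h => hq h.1
    refine ⟨s, ?_, fun q _ => hs0 q, fun _ => ?_⟩
    · intro q hq q' hq' h hqJ
      have huq := humin q hq hqJ
      have h1 := hsG q hqJ (hau.trans huq)
      apply huniq q' _ _ (hpush q q' h _ h1)
      by_cases hq'J : q' ∈ J'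
      · exact hsG q' hq'J ((hau.trans huq).trans h.1)
      · rw [hs0 q' hq'J]
        exact hzero q' ((hau.trans huq).trans h.1) (huq.trans h.1) hq'J
    · have hap : a.1.1 ≤ p.1.1 := hab.1.trans hbx.le
      exact huniq p _ _ (hsG p hpS hap) ⟨⟨b, hpb, hab, hbx, he.symm⟩, xa, hmH⟩
  obtain ⟨s, hs1, hs2, hs3⟩ := exists_section M hfd J' p m hsec
  have hjoin : ∀ q ∈ J', ∀ q' ∈ J', upw (rgt q q'.1.1) q'.1.2 ∈ J' := by
    intro q hq q' hq'
    show max q.1.1 q'.1.1 ∈ JS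
    rcases max_choice q.1.1 q'.1.1 with h | h
    · rw [h]; exact hq
    · rw [h]; exact hq'
  have hl : ∀ q q' : ↥upperT, q ≤ upw (rgt q q'.1.1) q'.1.2 := fun q q' =>
    (le_rgt _ _).trans (le_upw _ _)
  have hr : ∀ q q' : ↥upperT, q' ≤ upw (rgt q q'.1.1) q'.1.2 := fun q q' =>
    ⟨le_max_right _ _, le_max_right _ _⟩
  -- images from the left
  have hstar : ∀ q ∈ J', ∀ (c : ↥upperT) (hcq : c ≤ q) (e : M.V c), c ∉ J' →
      s q ≠ M.map hcq e := by
    intro q hq c hcq e hc heq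
    have hEc : Eh M p D c.1.1 = ⊥ := by
      by_contra h
      exact hc ⟨h, le_bot_iff.1 ((Hk_mono M p hcq.1).trans hq.2.le)⟩
    have hcx : c.1.1 ≤ p.1.1 := by
      by_contra h
      rw [Eh_self M p D (not_le.1 h).le] at hEc
      exact hD0 hEc
    let r := upw (rgt q p.1.1) p.1.2
    have hrJ : r ∈ J' := hjoin q hq p hpS
    have hqr : q ≤ r := hl q p
    have hpr : p ≤ r := hr q p
    let b := upw p r.1.2
    have hpb : p ≤ b := le_upw _ _
    have hbr : b ≤ r := upw_le hpr le_rfl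
    have hcb : c ≤ b := ⟨hcx, (hcq.2.trans hqr.2).trans (le_max_right _ _)⟩
    have hw := hinj r b hrJ hpb hbr rfl (max_eq_right hpr.2) (M.map hcb e - M.map hpb m) (by
      rw [map_sub, map_map, map_map, ← hs3, hs1 p r _ hpS, ← map_map M hcq hqr, ← heq,
        hs1 q r _ hq, sub_self])
    rw [sub_eq_zero] at hw
    have : m ∈ Eh M p D c.1.1 := ⟨hmD, c, b, e, hcb, hpb, le_rfl, rfl, hw⟩
    rw [hEc] at this
    exact hm (by simpa using this)
  have hsne : ∀ q ∈ J', s q ≠ 0 := by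
    intro q hq heq
    let r := upw (rgt q p.1.1) p.1.2
    have hrJ : r ∈ J' := hjoin q hq p hpS
    have hqr : q ≤ r := hl q p
    have hpr : p ≤ r := hr q p
    let b := upw p r.1.2
    have hpb : p ≤ b := le_upw _ _
    have hbr : b ≤ r := upw_le hpr le_rfl
    have hw := hinj r b hrJ hpb hbr rfl (max_eq_right hpr.2) (M.map hpb m) (by
      rw [map_map, ← hs3, hs1 p r _ hpS, ← hs1 q r hqr hq, heq, map_zero])
    exact hm (hK p xa r.1.2 m hmH hw)
  let N : ∀ q, Submodule k (M.V q) := fun q =>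
    ⨆ c : {c : ↥upperT // c ≤ q ∧ c ∉ J'}, LinearMap.range (M.map c.2.1)
  refine exists_cosection M J' ⟨p, hpS⟩ (fun q hq q' hq' => ⟨_, hjoin q hq q' hq', hl q q',
    hr q q'⟩) s hs1 hs2 N ?_ ?_ ?_
  · intro q q' h _ _ v hv
    have : N q ≤ (N q').comap (M.map h) := by
      refine iSup_le fun c => ?_
      rintro _ ⟨e, rfl⟩
      show M.map h (M.map c.2.1 e) ∈ N q'
      rw [map_map]
      exact Submodule.mem_iSup_of_mem (⟨c.1, c.2.1.trans h, c.2.2⟩ :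
        {c : ↥upperT // c ≤ q' ∧ c ∉ J'}) ⟨e, rfl⟩
    exact this hv
  · intro q q' h hq _ v
    exact Submodule.mem_iSup_of_mem (⟨q, h, hq⟩ : {c : ↥upperT // c ≤ q' ∧ c ∉ J'}) ⟨v, rfl⟩
  · intro q hq hmem
    by_cases hne : Nonempty {c : ↥upperT // c ≤ q ∧ c ∉ J'}
    · have hdir : Directed (· ≤ ·) fun c : {c : ↥upperT // c ≤ q ∧ c ∉ J'} =>
          LinearMap.range (M.map c.2.1) := by
        rintro ⟨c, hcq, hc⟩ ⟨c', hcq', hc'⟩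
        have hle : upw (rgt c c'.1.1) c'.1.2 ≤ q := upw_le (rgt_le hcq hcq'.1) hcq'.2
        refine ⟨⟨upw (rgt c c'.1.1) c'.1.2, hle, ?_⟩, ?_, ?_⟩
        · show ¬ (max c.1.1 c'.1.1 ∈ JS)
          rcases max_choice c.1.1 c'.1.1 with h | h
          · rw [h]; exact hc
          · rw [h]; exact hc'
        · rintro _ ⟨e, rfl⟩
          exact ⟨M.map (hl c c') e, map_map M _ _ _⟩
        · rintro _ ⟨e, rfl⟩
          exact ⟨M.map (hr c c') e, map_map M _ _ _⟩
      obtain ⟨c, e, he⟩ := (Submodule.mem_iSup_of_directed _ hdir).1 hmem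
      exact hstar q hq c.1 c.2.1 e c.2.2 he.symm
    · rw [not_nonempty_iff] at hne
      have : N q = ⊥ := iSup_of_empty _
      rw [this] at hmem
      exact hsne q hq (by simpa using hmem)

/-- reflection of the triangle -/
def sw (p : ↥upperT) : ↥upperT := ⟨(p.1.2, p.1.1), by
  have := upper_pos p
  show 0 < p.1.2 + p.1.1
  linarith⟩

theorem sw_le {p q : ↥upperT} (h : p ≤ q) : sw p ≤ sw q := ⟨h.2, h.1⟩

/-- the reflected module -/
def swapM : PersistenceModule k ↥upperT where
  V p := M.V (sw p)
  map h := M.map (sw_le h)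
  map_refl p := M.map_refl (sw p)
  map_trans h h' := M.map_trans (sw_le h) (sw_le h')

theorem swapM_me (hme : MiddleExactSub upperT M) : MiddleExactSub upperT (swapM M) := by
  intro x x' y y' hx hy ha hb hc hd mb mc h
  have ha' : 0 < x + y := ha
  have hb' : 0 < x + y' := hb
  have hc' : 0 < x' + y := hc
  have hd' : 0 < x' + y' := hd
  obtain ⟨ma, h1, h2⟩ := me hme (ha := (by linarith : 0 < y + x)) (hb := (by linarith : 0 < y + x'))
    (hc := (by linarith : 0 < y' + x)) (hd := (by linarith : 0 < y' + x'))
    (pt_le le_rfl hx) (pt_le hy le_rfl) (pt_le hy le_rfl) (pt_le le_rfl hx) mc mb h.symm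
  exact ⟨ma, h2, h1⟩

theorem case2' (hfd : ∀ p, FiniteDimensional k (M.V p)) (hme : MiddleExactSub upperT M)
    (hK : ∀ p x y (v : M.V p), v ∈ Hk M p x → v ∈ Vk M p y → v = 0)
    (p : ↥upperT) (m0 : M.V p) (hm0 : m0 ≠ 0) (y1 : ℝ) (hy1 : m0 ∈ Vk M p y1) :
    ∃ JT : Set ℝ, IsIntervalLin JT ∧ {q : ↥upperT | q.1.2 ∈ JT}.Nonempty ∧
      HasSummand M {q : ↥upperT | q.1.2 ∈ JT} := by
  obtain ⟨JT, h1, ⟨q, hq⟩, s, f, hs1, hs2, hf1, hf2, hsf⟩ := case2 (swapM M) (fun p => hfd (sw p))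
    (swapM_me M hme) (fun p x y v h1 h2 => hK (sw p) y x v h2 h1) (sw p) m0 hm0 y1 hy1
  refine ⟨JT, h1, ⟨sw q, hq⟩, fun q => s (sw q), fun q => f (sw q), ?_, ?_, ?_, ?_, ?_⟩
  · exact fun q q' h hq => hs1 (sw q) (sw q') (sw_le h) hq
  · exact fun q hq => hs2 (sw q) hq
  · exact fun q q' h hq => hf1 (sw q) (sw q') (sw_le h) hq
  · exact fun q hq => hf2 (sw q) hq
  · exact fun q hq => hsf (sw q) hq

end Strip
end PMod

namespace PMod

section Quadrant

variable {k : Type} [Field k] (M : PersistenceModule k ↥upperT)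

/-- least upper bound in the triangle -/
def jn (p q : ↥upperT) : ↥upperT :=
  ⟨(max p.1.1 q.1.1, max p.1.2 q.1.2), by
    have h1 : 0 < p.1.1 + p.1.2 := p.2
    have h2 := le_max_left p.1.1 q.1.1
    have h3 := le_max_left p.1.2 q.1.2
    show 0 < max p.1.1 q.1.1 + max p.1.2 q.1.2
    linarith⟩

theorem le_jn_left (p q : ↥upperT) : p ≤ jn p q := ⟨le_max_left _ _, le_max_left _ _⟩
theorem le_jn_right (p q : ↥upperT) : q ≤ jn p q := ⟨le_max_right _ _, le_max_right _ _⟩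

theorem map_inj (hH : ∀ p x, Hk M p x = ⊥) (hV : ∀ p y, Vk M p y = ⊥) {p q : ↥upperT}
    (h : p ≤ q) (v : M.V p) (hv : M.map h v = 0) : v = 0 := by
  have h1 : rgt p q.1.1 ≤ q := rgt_le h le_rfl
  rw [← map_map M (le_rgt p q.1.1) h1] at hv
  have h2 := mem_Vk M h1 (y := q.1.2) (le_antisymm (le_max_right _ _) h1.1) (le_max_right _ _) hv
  rw [hV, Submodule.mem_bot] at h2
  have h3 : v ∈ Hk M p q.1.1 := h2
  rwa [hH, Submodule.mem_bot] at h3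

section Ambient

variable {M} {W : Type} [AddCommGroup W] [Module k W] (j : ∀ p, M.V p →ₗ[k] W)

theorem range_mono (hj : ∀ p q (h : p ≤ q) v, j q (M.map h v) = j p v) {p q : ↥upperT} (h : p ≤ q)
    {w : W} (hw : w ∈ LinearMap.range (j p)) : w ∈ LinearMap.range (j q) := by
  obtain ⟨v, rfl⟩ := hw
  exact ⟨M.map h v, hj p q h v⟩

theorem range_meet (hme : MiddleExactSub upperT M)
    (hj : ∀ p q (h : p ≤ q) v, j q (M.map h v) = j p v)
    (hinj : ∀ p, Function.Injective (j p)) {p q r : ↥upperT} (h1 : p.1.1 ≤ r.1.1)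
    (h2 : q.1.2 ≤ r.1.2) {w : W} (hp : w ∈ LinearMap.range (j p))
    (hq : w ∈ LinearMap.range (j q)) : w ∈ LinearMap.range (j r) := by
  have hr := upper_pos r
  have e1 := le_max_right p.1.2 r.1.2
  have e2 := le_max_right q.1.1 r.1.1
  let b : ↥upperT := pt r.1.1 (max p.1.2 r.1.2) (by linarith)
  let c : ↥upperT := pt (max q.1.1 r.1.1) r.1.2 (by linarith)
  let d : ↥upperT := pt (max q.1.1 r.1.1) (max p.1.2 r.1.2) (by linarith)
  have hpb : p ≤ b := ⟨h1, le_max_left _ _⟩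
  have hqc : q ≤ c := ⟨le_max_left _ _, h2⟩
  obtain ⟨mb, hb⟩ := range_mono j hj hpb hp
  obtain ⟨mc, hc⟩ := range_mono j hj hqc hq
  have hbd : b ≤ d := ⟨e2, le_rfl⟩
  have hcd : c ≤ d := ⟨le_rfl, e1⟩
  obtain ⟨ma, hma, -⟩ := me hme (ha := hr) (pt_le le_rfl e1) (pt_le e2 le_rfl) hbd hcd mb mc
    (hinj d (by rw [hj, hj, hb, hc]))
  refine ⟨ma, ?_⟩
  have := hj (pt r.1.1 r.1.2 hr) b (pt_le le_rfl e1) ma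
  rw [hma, hb] at this
  exact this.symm

/-- union of the images at points with a given property -/
def unionSub (hj : ∀ p q (h : p ≤ q) v, j q (M.map h v) = j p v) (P : ↥upperT → Prop)
    (hne : ∃ p, P p) (hP : ∀ p q, P p → P q → P (jn p q)) : Submodule k W where
  carrier := {w | ∃ p, P p ∧ w ∈ LinearMap.range (j p)}
  zero_mem' := hne.imp fun p hp => ⟨hp, zero_mem _⟩
  add_mem' := by
    rintro a b ⟨p, hp, ha⟩ ⟨q, hq, hb⟩
    exact ⟨jn p q, hP p q hp hq, add_mem (range_mono j hj (le_jn_left p q) ha)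
      (range_mono j hj (le_jn_right p q) hb)⟩
  smul_mem' := by
    rintro c a ⟨p, hp, ha⟩
    exact ⟨p, hp, Submodule.smul_mem _ c ha⟩

theorem exists_fst (x : ℝ) : ∃ p : ↥upperT, p.1.1 = x :=
  ⟨pt x (1 - x) (by linarith), rfl⟩
theorem exists_snd (y : ℝ) : ∃ p : ↥upperT, p.1.2 = y :=
  ⟨pt (1 - y) y (by linarith), rfl⟩

theorem case3_aux (hfd : ∀ p, FiniteDimensional k (M.V p)) (hme : MiddleExactSub upperT M)
    (hj : ∀ p q (h : p ≤ q) v, j q (M.map h v) = j p v)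
    (hinj : ∀ p, Function.Injective (j p)) (p : ↥upperT) (m0 : M.V p) (hm0 : m0 ≠ 0) :
    ∃ J : Set (ℝ × ℝ), IsBlock J ∧ {q : ↥upperT | q.1 ∈ J}.Nonempty ∧
      HasSummand M {q : ↥upperT | q.1 ∈ J} := by
  classical
  have := hfd p
  let X : ℝ → Submodule k W := fun x => unionSub j hj (fun p => p.1.1 ≤ x)
    ((exists_fst x).imp fun _ h => h.le) (fun _ _ h h' => max_le h h')
  let Y : ℝ → Submodule k W := fun y => unionSub j hj (fun p => p.1.2 ≤ y)
    ((exists_snd y).imp fun _ h => h.le) (fun _ _ h h' => max_le h h')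
  have hX : Monotone X := fun x x' h w ⟨q, hq, hw⟩ => ⟨q, hq.trans h, hw⟩
  have hY : Monotone Y := fun x x' h w ⟨q, hq, hw⟩ => ⟨q, hq.trans h, hw⟩
  let X' : ℝ → Submodule k (M.V p) := fun x => (X x).comap (j p)
  let Y' : ℝ → Submodule k (M.V p) := fun y => (Y y).comap (j p)
  have hX' : Monotone X' := fun x x' h => Submodule.comap_mono (hX h)
  have hY' : Monotone Y' := fun x x' h => Submodule.comap_mono (hY h)
  have hXp : X' p.1.1 = ⊤ := by
    rw [eq_top_iff]; intro v _; exact ⟨p, le_rfl, ⟨v, rfl⟩⟩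
  have hYp : Y' p.1.2 = ⊤ := by
    rw [eq_top_iff]; intro v _; exact ⟨p, le_rfl, ⟨v, rfl⟩⟩
  have htop : (⊤ : Submodule k (M.V p)) ≠ ⊥ := fun h =>
    hm0 ((Submodule.mem_bot k).1 (h ▸ Submodule.mem_top))
  obtain ⟨A, ⟨xa, hA⟩, hA0, hAmin⟩ := exists_min (Set.range X') ⟨_, ⟨p.1.1, rfl⟩, by rwa [hXp]⟩
    (by
      rintro _ ⟨a, rfl⟩ _ ⟨b, rfl⟩
      rcases le_total a b with h | h
      · exact Or.inl (hX' h)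
      · exact Or.inr (hX' h))
  obtain ⟨B, ⟨yb, hB⟩, hB0, hBmin⟩ := exists_min (Set.range fun y => A ⊓ Y' y)
    ⟨_, ⟨p.1.2, rfl⟩, by simpa only [hYp, inf_top_eq] using hA0⟩
    (by
      rintro _ ⟨a, rfl⟩ _ ⟨b, rfl⟩
      rcases le_total a b with h | h
      · exact Or.inl (inf_le_inf_left _ (hY' h))
      · exact Or.inr (inf_le_inf_left _ (hY' h)))
  obtain ⟨m, hmB, hm⟩ := Submodule.exists_mem_ne_zero_of_ne_bot hB0
  have hmA : m ∈ A := by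
    rw [← hB] at hmB; exact hmB.1
  let JS : Set ℝ := {x | X' x ≠ ⊥}
  let JT : Set ℝ := {y | A ⊓ Y' y ≠ ⊥}
  have hJS : IsFilter JS := fun a b hab ha hb => ha (le_bot_iff.1 ((hX' hab).trans hb.le))
  have hJT : IsFilter JT := fun a b hab ha hb =>
    ha (le_bot_iff.1 ((inf_le_inf_left _ (hY' hab)).trans hb.le))
  have hpS : p.1.1 ∈ JS := by show X' _ ≠ ⊥; rwa [hXp]
  have hpT : p.1.2 ∈ JT := by show A ⊓ Y' _ ≠ ⊥; rwa [hYp, inf_top_eq]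
  have hmX : ∀ x ∈ JS, j p m ∈ X x := fun x hx => hAmin _ ⟨x, rfl⟩ hx hmA
  have hmY : ∀ y ∈ JT, j p m ∈ Y y := fun y hy => (hBmin _ ⟨y, rfl⟩ hy hmB).2
  have hmem : ∀ q : ↥upperT, q.1 ∈ JS ×ˢ JT → j p m ∈ LinearMap.range (j q) := by
    intro q hq
    obtain ⟨a, ha, ha'⟩ := hmX _ hq.1
    obtain ⟨b, hb, hb'⟩ := hmY _ hq.2
    exact range_meet j hme hj hinj ha hb ha' hb'
  let N : Submodule k W := Submodule.span k {w | ∃ q : ↥upperT, q.1 ∉ JS ×ˢ JT ∧ w ∈ LinearMap.range (j q)}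
  have hsplit : ∀ w ∈ N, ∃ a b, w = a + b ∧ (a = 0 ∨ ∃ q : ↥upperT, q.1.1 ∉ JS ∧ a ∈ LinearMap.range (j q)) ∧
      (b = 0 ∨ ∃ q : ↥upperT, q.1.2 ∉ JT ∧ b ∈ LinearMap.range (j q)) := by
    have key1 : ∀ a a' : W, (a = 0 ∨ ∃ q : ↥upperT, q.1.1 ∉ JS ∧ a ∈ LinearMap.range (j q)) →
        (a' = 0 ∨ ∃ q : ↥upperT, q.1.1 ∉ JS ∧ a' ∈ LinearMap.range (j q)) →
        (a + a' = 0 ∨ ∃ q : ↥upperT, q.1.1 ∉ JS ∧ a + a' ∈ LinearMap.range (j q)) := by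
      rintro a a' (rfl | ⟨q, hq, ha⟩) (rfl | ⟨q', hq', ha'⟩)
      · left; simp
      · right; exact ⟨q', hq', by simpa using ha'⟩
      · right; exact ⟨q, hq, by simpa using ha⟩
      · right
        refine ⟨jn q q', ?_, add_mem (range_mono j hj (le_jn_left _ _) ha)
          (range_mono j hj (le_jn_right _ _) ha')⟩
        show max _ _ ∉ JS
        rcases max_choice q.1.1 q'.1.1 with h | h <;> rw [h] <;> assumption
    have key2 : ∀ a a' : W, (a = 0 ∨ ∃ q : ↥upperT, q.1.2 ∉ JT ∧ a ∈ LinearMap.range (j q)) →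
        (a' = 0 ∨ ∃ q : ↥upperT, q.1.2 ∉ JT ∧ a' ∈ LinearMap.range (j q)) →
        (a + a' = 0 ∨ ∃ q : ↥upperT, q.1.2 ∉ JT ∧ a + a' ∈ LinearMap.range (j q)) := by
      rintro a a' (rfl | ⟨q, hq, ha⟩) (rfl | ⟨q', hq', ha'⟩)
      · left; simp
      · right; exact ⟨q', hq', by simpa using ha'⟩
      · right; exact ⟨q, hq, by simpa using ha⟩
      · right
        refine ⟨jn q q', ?_, add_mem (range_mono j hj (le_jn_left _ _) ha)
          (range_mono j hj (le_jn_right _ _) ha')⟩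
        show max _ _ ∉ JT
        rcases max_choice q.1.2 q'.1.2 with h | h <;> rw [h] <;> assumption
    intro w hw
    induction hw using Submodule.span_induction with
    | mem w hw =>
      obtain ⟨q, hq, hw⟩ := hw
      by_cases h : q.1.1 ∈ JS
      · exact ⟨0, w, by simp, Or.inl rfl, Or.inr ⟨q, fun h' => hq ⟨h, h'⟩, hw⟩⟩
      · exact ⟨w, 0, by simp, Or.inr ⟨q, h, hw⟩, Or.inl rfl⟩
    | zero => exact ⟨0, 0, by simp, Or.inl rfl, Or.inl rfl⟩
    | add x y _ _ hx hy =>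
      obtain ⟨a, b, rfl, ha, hb⟩ := hx
      obtain ⟨a', b', rfl, ha', hb'⟩ := hy
      exact ⟨a + a', b + b', by abel, key1 _ _ ha ha', key2 _ _ hb hb'⟩
    | smul c x _ hx =>
      obtain ⟨a, b, rfl, ha, hb⟩ := hx
      refine ⟨c • a, c • b, smul_add _ _ _, ha.imp (by rintro rfl; simp) ?_, hb.imp (by rintro rfl; simp) ?_⟩
      · exact fun ⟨q, hq, h⟩ => ⟨q, hq, Submodule.smul_mem _ _ h⟩
      · exact fun ⟨q, hq, h⟩ => ⟨q, hq, Submodule.smul_mem _ _ h⟩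
  have hnot : j p m ∉ N := by
    intro hmN
    obtain ⟨a, b, hab, ha, hb⟩ := hsplit _ hmN
    have hbY : b ∈ Y p.1.2 := by
      rcases hb with rfl | ⟨q, hq, hb⟩
      · exact zero_mem _
      · refine ⟨q, ?_, hb⟩
        by_contra hcon
        exact hq (hJT _ _ (not_le.1 hcon).le hpT)
    have haY : a ∈ Y p.1.2 := by
      have : a = j p m - b := by rw [hab]; simp
      rw [this]
      exact sub_mem (hmY _ hpT) hbY
    have ha0 : a = 0 := by
      rcases ha with rfl | ⟨q, hq, ha⟩
      · rfl
      · obtain ⟨t, ht, hat⟩ := haY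
        have hqp : q.1.1 ≤ p.1.1 := by
          by_contra hcon
          exact hq (hJS _ _ (not_le.1 hcon).le hpS)
        obtain ⟨v, rfl⟩ := range_meet j hme hj hinj hqp ht ha hat
        have hv : v ∈ X' q.1.1 := ⟨q, le_rfl, ha⟩
        have hbot : X' q.1.1 = ⊥ := not_not.1 hq
        rw [hbot, Submodule.mem_bot] at hv
        rw [hv, map_zero]
    rw [ha0, zero_add] at hab
    rcases hb with hb | ⟨q, hq, hb⟩
    · exact hm (hinj p (by rw [hab, hb, map_zero]))
    · have hv : m ∈ A ⊓ Y' q.1.2 := ⟨hmA, ⟨q, le_rfl, hab ▸ hb⟩⟩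
      have hbot : A ⊓ Y' q.1.2 = ⊥ := not_not.1 hq
      rw [hbot, Submodule.mem_bot] at hv
      exact hm hv
  obtain ⟨f0, hf0, hf0N⟩ := Submodule.exists_dual_map_eq_bot_of_notMem hnot inferInstance
  have hfN : ∀ w ∈ N, f0 w = 0 := fun w hw => by
    have : f0 w ∈ N.map f0 := ⟨w, hw, rfl⟩
    rwa [hf0N, Submodule.mem_bot] at this
  let f : Module.Dual k W := (f0 (j p m))⁻¹ • f0
  have hfm : f (j p m) = 1 := by simp [f, hf0]
  refine ⟨JS ×ˢ JT, ⟨⟨p.1, hpS, hpT⟩, Or.inr (Or.inl ⟨JS, JT, ⟨⟨_, hpS⟩, hJS.isConvex⟩, hJS,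
    ⟨⟨_, hpT⟩, hJT.isConvex⟩, hJT, rfl⟩)⟩, ⟨p, hpS, hpT⟩, ?_⟩
  let s : ∀ q, M.V q := fun q => if h : q.1 ∈ JS ×ˢ JT then (hmem q h).choose else 0
  have hs : ∀ q : ↥upperT, q.1 ∈ JS ×ˢ JT → j q (s q) = j p m := by
    intro q h
    simp only [s, dif_pos h]
    exact (hmem q h).choose_spec
  refine ⟨s, fun q => if q.1 ∈ JS ×ˢ JT then f.comp (j q) else 0, ?_, ?_, ?_, ?_, ?_⟩
  · intro a b h ha
    have hb : b.1 ∈ JS ×ˢ JT := ⟨hJS _ _ h.1 ha.1, hJT _ _ h.2 ha.2⟩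
    exact hinj b (by rw [hj, hs a ha, hs b hb])
  · intro q hq
    exact dif_neg hq
  · intro a b h hb v
    have hb' : b.1 ∈ JS ×ˢ JT := hb
    by_cases ha : a.1 ∈ JS ×ˢ JT
    · simp only [if_pos ha, if_pos hb', LinearMap.comp_apply, hj]
    · simp only [if_neg ha, if_pos hb', LinearMap.comp_apply, hj, LinearMap.zero_apply]
      have : f0 (j a v) = 0 := hfN _ (Submodule.subset_span ⟨a, ha, v, rfl⟩)
      simp [f, this]
  · intro q hq
    exact if_neg hq
  · intro q hq
    have hq' : q.1 ∈ JS ×ˢ JT := hq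
    simp only [if_pos hq', LinearMap.comp_apply]
    rw [hs q hq', hfm]

end Ambient

theorem case3 (hfd : ∀ p, FiniteDimensional k (M.V p)) (hme : MiddleExactSub upperT M)
    (hH : ∀ p x, Hk M p x = ⊥) (hV : ∀ p y, Vk M p y = ⊥) (p : ↥upperT) (m0 : M.V p)
    (hm0 : m0 ≠ 0) :
    ∃ J : Set (ℝ × ℝ), IsBlock J ∧ {q : ↥upperT | q.1 ∈ J}.Nonempty ∧
      HasSummand M {q : ↥upperT | q.1 ∈ J} := by
  classical
  have : IsDirectedOrder ↥upperT := ⟨fun a b => ⟨jn a b, le_jn_left a b, le_jn_right a b⟩⟩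
  have : Nonempty ↥upperT := ⟨p⟩
  have : DirectedSystem M.V (fun i j h => M.map (x := i) (y := j) h) :=
    { map_self := fun i x => map_id M _ x
      map_map := fun k j i h1 h2 x => map_map M h1 h2 x }
  refine case3_aux (W := Module.DirectLimit M.V (fun i j h => M.map (x := i) (y := j) h))
    (fun q => Module.DirectLimit.of k _ _ _ q) hfd hme
    (fun a b h v => Module.DirectLimit.of_f) ?_ p m0 hm0
  intro q
  rw [injective_iff_map_eq_zero]
  intro v hv
  obtain ⟨r, hr, h0⟩ := Module.DirectLimit.of.zero_exact hv
  exact map_inj M hH hV hr v h0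

theorem main_block (hfd : ∀ p, FiniteDimensional k (M.V p)) (hme : MiddleExactSub upperT M)
    (p : ↥upperT) (m0 : M.V p) (hm0 : m0 ≠ 0) :
    ∃ J : Set (ℝ × ℝ), IsBlock J ∧ {q : ↥upperT | q.1 ∈ J}.Nonempty ∧
      HasSummand M {q : ↥upperT | q.1 ∈ J} := by
  by_cases hK : ∀ p x y (v : M.V p), v ∈ Hk M p x → v ∈ Vk M p y → v = 0
  · by_cases hH : ∀ p x, Hk M p x = ⊥
    · by_cases hV : ∀ p y, Vk M p y = ⊥
      · exact case3 M hfd hme hH hV p m0 hm0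
      · push Not at hV
        obtain ⟨q, y, hq⟩ := hV
        obtain ⟨m, hm, hm'⟩ := Submodule.exists_mem_ne_zero_of_ne_bot hq
        obtain ⟨JT, hJ, ⟨r, hr⟩, hS⟩ := case2' M hfd hme hK q m hm' y hm
        have he : {q : ↥upperT | q.1.2 ∈ JT} = {q : ↥upperT | q.1 ∈ (Set.univ : Set ℝ) ×ˢ JT} := by
          ext q; simp [Set.mem_prod]
        rw [he] at hS
        exact ⟨Set.univ ×ˢ JT, ⟨⟨r.1, trivial, hr⟩, Or.inr (Or.inr (Or.inr ⟨JT, hJ, rfl⟩))⟩,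
          ⟨r, trivial, hr⟩, hS⟩
    · push Not at hH
      obtain ⟨q, x, hq⟩ := hH
      obtain ⟨m, hm, hm'⟩ := Submodule.exists_mem_ne_zero_of_ne_bot hq
      obtain ⟨JS, hJ, ⟨r, hr⟩, hS⟩ := case2 M hfd hme hK q m hm' x hm
      have he : {q : ↥upperT | q.1.1 ∈ JS} = {q : ↥upperT | q.1 ∈ JS ×ˢ (Set.univ : Set ℝ)} := by
        ext q; simp [Set.mem_prod]
      rw [he] at hS
      exact ⟨JS ×ˢ Set.univ, ⟨⟨r.1, hr, trivial⟩, Or.inr (Or.inr (Or.inl ⟨JS, hJ, rfl⟩))⟩,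
        ⟨r, hr, trivial⟩, hS⟩
  · push Not at hK
    obtain ⟨q, x, y, v, h1, h2, h3⟩ := hK
    exact case1 M hfd hme q v h3 x y h1 h2

end Quadrant

end PMod

namespace PMod

section Decomp

variable {k : Type} [Field k]

theorem Isomorphic.symm' {P : Type} [Preorder P] {M N : PersistenceModule k P}
    (h : Isomorphic M N) : Isomorphic N M := by
  obtain ⟨f, hf⟩ := h
  refine ⟨⟨fun x => (LinearEquiv.ofBijective (f.app x) (hf x)).symm.toLinearMap, ?_⟩, ?_⟩
  · intro x y h
    ext v
    obtain ⟨w, rfl⟩ := (hf x).2 v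
    have h1 := LinearMap.congr_fun (f.natural h) w
    simp only [LinearMap.comp_apply, LinearEquiv.coe_coe] at h1 ⊢
    rw [h1]
    have e1 : (LinearEquiv.ofBijective (f.app x) (hf x)).symm (f.app x w) = w :=
      (LinearEquiv.ofBijective (f.app x) (hf x)).symm_apply_apply w
    have e2 : (LinearEquiv.ofBijective (f.app y) (hf y)).symm (f.app y (M.map h w)) = M.map h w :=
      (LinearEquiv.ofBijective (f.app y) (hf y)).symm_apply_apply _
    rw [e1, e2]
  · intro x
    exact (LinearEquiv.ofBijective (f.app x) (hf x)).symm.bijective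

theorem assemble {P : Type} [Preorder P] (M : PersistenceModule k P) {ι : Type}
    (N : ι → ∀ p, Submodule k (M.V p)) (hind : ∀ p, iSupIndep (fun i => N i p))
    (htop : ∀ p, ⨆ i, N i p = ⊤) (J : ι → Set P) (hJ : ∀ i, IsConvex (J i))
    (s : ∀ i p, N i p)
    (hs1 : ∀ i p q (h : p ≤ q), p ∈ J i → M.map h (s i p : M.V p) = s i q)
    (hs2 : ∀ i p, p ∉ J i → s i p = 0) (hs3 : ∀ i p, p ∈ J i → s i p ≠ 0)
    (hgen : ∀ i p (v : N i p), ∃ c : k, v = c • s i p) :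
    Isomorphic M (directSum fun i => intervalModule k (J i) (hJ i)) := by
  classical
  apply Isomorphic.symm'
  let e0 : ∀ i p, kMod k (J i) p →ₗ[k] N i p := fun i p =>
    (LinearMap.toSpanSingleton k (N i p) (s i p)).comp (kMod k (J i) p).subtype
  have he0 : ∀ i p c, e0 i p c = (c : k) • s i p := fun i p c => rfl
  have hb : ∀ i p, Function.Bijective (e0 i p) := by
    intro i p
    by_cases hp : p ∈ J i
    · constructor
      · intro a b hab
        rw [he0, he0] at hab
        exact Subtype.ext (smul_left_injective k (hs3 i p hp) hab)
      · intro v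
        obtain ⟨c, rfl⟩ := hgen i p v
        exact ⟨⟨c, by simp [kMod, hp]⟩, rfl⟩
    · constructor
      · intro a b _
        exact Subtype.ext (by rw [kMod_coe_eq_zero k hp a, kMod_coe_eq_zero k hp b])
      · intro v
        obtain ⟨c, hc⟩ := hgen i p v
        refine ⟨0, ?_⟩
        rw [hc, hs2 i p hp, map_zero, smul_zero]
  let e : ∀ p, (Π₀ i, kMod k (J i) p) ≃ₗ[k] Π₀ i, N i p := fun p =>
    DFinsupp.mapRange.linearEquiv fun i => LinearEquiv.ofBijective (e0 i p) (hb i p)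
  let g : ∀ p, (Π₀ i, N i p) →ₗ[k] M.V p := fun p => DFinsupp.lsum ℕ fun i => (N i p).subtype
  have hg : ∀ p, Function.Bijective (g p) := by
    intro p
    refine ⟨(hind p).dfinsupp_lsum_injective, ?_⟩
    rw [← LinearMap.range_eq_top]
    exact (Submodule.iSup_eq_range_dfinsupp_lsum _).symm.trans (htop p)
  let app : ∀ p, (Π₀ i, kMod k (J i) p) →ₗ[k] M.V p := fun p => (g p).comp (e p).toLinearMap
  have happ : ∀ p i (c : kMod k (J i) p), app p (DFinsupp.single i c) = (c : k) • (s i p : M.V p) := by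
    intro p i c
    show g p (e p (DFinsupp.single i c)) = _
    have : e p (DFinsupp.single i c) = DFinsupp.single i (e0 i p c) := by
      exact DFinsupp.mapRange_single (hf := fun i => map_zero _)
    rw [this]
    simp [g, he0]
  refine ⟨⟨app, ?_⟩, fun p => (hg p).comp (e p).bijective⟩
  intro p q h
  apply DFinsupp.lhom_ext
  intro i c
  change kMod k (J i) p at c
  have e1 : (directSum fun i => intervalModule k (J i) (hJ i)).map h
      (DFinsupp.single (β := fun i => kMod k (J i) p) i c) =
      DFinsupp.single (β := fun i => kMod k (J i) q) i (intervalMap k (J i) h c) := by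
    exact DFinsupp.mapRange_single (hf := fun i => map_zero _)
  have e2 := happ p i c
  have e3 := happ q i (intervalMap k (J i) h c)
  refine (congrArg (M.map h) e2).trans (Eq.trans ?_ (congrArg (app q) e1).symm)
  rw [e3, map_smul]
  by_cases hp : p ∈ J i
  · rw [hs1 i p q h hp]
    by_cases hq : q ∈ J i
    · simp [intervalMap, hq]
    · simp [hs2 i q hq]
  · have hc := kMod_coe_eq_zero k hp c
    have hc' : c = 0 := Subtype.ext hc
    rw [hc', map_zero]
    simp

variable {V : Type} [AddCommGroup V] [Module k V]

theorem idem_semisimple (e : Module.End k V) (he : e * e = e) : e.IsSemisimple := by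
  have hsep : (Polynomial.X ^ 2 - Polynomial.X : Polynomial k).Separable := by
    refine ⟨-4, 2 * Polynomial.X - 1, ?_⟩
    simp
    ring
  refine Module.End.isSemisimple_of_squarefree_aeval_eq_zero hsep.squarefree ?_
  simp [pow_two, he]

theorem idem_maxGen (e : Module.End k V) (he : e * e = e) (μ : k) :
    e.maxGenEigenspace μ = e.eigenspace μ :=
  (idem_semisimple e he).isFinitelySemisimple.maxGenEigenspace_eq_eigenspace μ

theorem idem_iSup (e : Module.End k V) (he : e * e = e) : ⨆ μ, e.maxGenEigenspace μ = ⊤ := by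
  rw [eq_top_iff]
  intro v _
  have hee : e (e v) = e v := LinearMap.congr_fun he v
  have h1 : e v ∈ e.maxGenEigenspace 1 := by
    rw [idem_maxGen e he, Module.End.mem_eigenspace_iff, hee, one_smul]
  have h2 : v - e v ∈ e.maxGenEigenspace 0 := by
    rw [idem_maxGen e he, Module.End.mem_eigenspace_iff, map_sub, hee, sub_self, zero_smul]
  have : v = e v + (v - e v) := by abel
  rw [this]
  exact add_mem (Submodule.mem_iSup_of_mem _ h1) (Submodule.mem_iSup_of_mem _ h2)

/-- simultaneous eigenspace -/
def simEig {ι : Type} (f : ι → Module.End k V) (χ : ι → k) : Submodule k V :=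
  ⨅ i, (f i).eigenspace (χ i)

theorem mem_simEig {ι : Type} {f : ι → Module.End k V} {χ : ι → k} {v : V} :
    v ∈ simEig f χ ↔ ∀ i, f i v = χ i • v := by
  simp [simEig, Submodule.mem_iInf]

theorem simEig_indep {ι : Type} (f : ι → Module.End k V) (hf : ∀ i, f i * f i = f i)
    (hc : ∀ i j, Commute (f i) (f j)) : iSupIndep (simEig f) := by
  have h := Module.End.independent_iInf_maxGenEigenspace_of_forall_mapsTo f
    (fun i j φ => Module.End.mapsTo_maxGenEigenspace_of_comm (hc j i) φ)
  simp only [idem_maxGen _ (hf _)] at h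
  exact h

theorem simEig_top [FiniteDimensional k V] {ι : Type} (f : ι → Module.End k V)
    (hf : ∀ i, f i * f i = f i)
    (hc : ∀ i j, Commute (f i) (f j)) : ⨆ χ, simEig f χ = ⊤ := by
  have h := Module.End.iSup_iInf_maxGenEigenspace_eq_top_of_iSup_maxGenEigenspace_eq_top_of_commute
    f (fun i j _ => hc i j) (fun i => idem_iSup _ (hf i))
  simp only [idem_maxGen _ (hf _)] at h
  exact h

section Fam

variable {P : Type} [Preorder P] (M : PersistenceModule k P)

/-- pairwise commuting sets of natural idempotents -/
structure GoodSet (E : Set (∀ p, Module.End k (M.V p))) : Prop where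
  nat : ∀ e ∈ E, ∀ p q (h : p ≤ q) v, M.map h (e p v) = e q (M.map h v)
  idem : ∀ e ∈ E, ∀ p, e p * e p = e p
  comm : ∀ e ∈ E, ∀ e' ∈ E, ∀ p, Commute (e p) (e' p)

theorem exists_maximal_good : ∃ E, Maximal (· ∈ {E | GoodSet M E}) E := by
  apply zorn_subset
  intro c hc hchain
  refine ⟨⋃₀ c, ⟨?_, ?_, ?_⟩, fun s hs => Set.subset_sUnion_of_mem hs⟩
  · rintro e ⟨E, hE, he⟩
    exact (hc hE).nat e he
  · rintro e ⟨E, hE, he⟩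
    exact (hc hE).idem e he
  · rintro e ⟨E, hE, he⟩ e' ⟨E', hE', he'⟩
    rcases hchain.total hE hE' with h | h
    · exact (hc hE').comm e (h he) e' he'
    · exact (hc hE).comm e he e' (h he')

def subM (N : ∀ p, Submodule k (M.V p)) (hN : ∀ p q (h : p ≤ q), ∀ v ∈ N p, M.map h v ∈ N q) :
    PersistenceModule k P where
  V p := N p
  map {p q} h := (M.map h).restrict (hN p q h)
  map_refl p := by
    ext v
    exact map_id M _ _
  map_trans {p q r} h1 h2 := by
    ext v
    exact (map_map M h1 h2 _).symm

end Fam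

theorem subM_me (M : PersistenceModule k ↥upperT) (N : ∀ p, Submodule k (M.V p))
    (hN : ∀ p q (h : p ≤ q), ∀ v ∈ N p, M.map h v ∈ N q) (π : ∀ p, M.V p →ₗ[k] N p)
    (hπ : ∀ p (v : N p), π p v = v)
    (hnat : ∀ p q (h : p ≤ q) v, M.map h (π p v : M.V p) = π q (M.map h v))
    (hme : MiddleExactSub upperT M) : MiddleExactSub upperT (subM M N hN) := by
  intro x x' y y' hx hy ha hb hc hd mb mc h
  change N _ at mb
  change N _ at mc
  obtain ⟨ma, h1, h2⟩ := hme x x' y y' hx hy ha hb hc hd mb.1 mc.1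
    (congrArg (Subtype.val (p := fun v => v ∈ N _)) h)
  refine ⟨π _ ma, Subtype.ext ?_, Subtype.ext ?_⟩
  · refine (hnat _ _ _ ma).trans ?_
    rw [h1, hπ]
  · refine (hnat _ _ _ ma).trans ?_
    rw [h2, hπ]

theorem key_step (M : PersistenceModule k ↥upperT)
    (hfd : ∀ p, FiniteDimensional k (M.V p)) (hme : MiddleExactSub upperT M)
    {E : Set (∀ p, Module.End k (M.V p))} (hE' : GoodSet M E)
    (hmax : ∀ {E'}, GoodSet M E' → E ⊆ E' → E' ⊆ E) (χ : E → k)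
    (N : ∀ p, Submodule k (M.V p)) (hmemN : ∀ p (v : M.V p), v ∈ N p ↔ ∀ e : E, e.1 p v = χ e • v)
    (hst : ∀ p q (h : p ≤ q), ∀ v ∈ N p, M.map h v ∈ N q) (π : ∀ p, M.V p →ₗ[k] N p)
    (hπ : ∀ p (v : N p), π p v = v)
    (hnat : ∀ p q (h : p ≤ q) v, M.map h (π p v : M.V p) = π q (M.map h v))
    (hπe : ∀ p (e : E) v, π p (e.1 p v) = χ e • π p v) :
    (∃ p, N p ≠ ⊥) → ∃ J : Set (ℝ × ℝ), IsBlock J ∧ ∃ s : ∀ p, N p,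
      (∀ p q (h : p ≤ q), p.1 ∈ J → M.map h (s p : M.V p) = s q) ∧
      (∀ p : ↥upperT, p.1 ∉ J → s p = 0) ∧ (∀ p : ↥upperT, p.1 ∈ J → s p ≠ 0) ∧
      (∀ p (v : N p), ∃ c : k, v = c • s p) := by
  rintro ⟨p, hp⟩
  obtain ⟨m, hm, hm0⟩ := Submodule.exists_mem_ne_zero_of_ne_bot hp
  obtain ⟨J, hJ, ⟨r, hr⟩, s, f, hs1, hs2, hf1, hf2, hsf⟩ :=
    main_block (subM M N hst)
      (fun q => by have := hfd q; exact inferInstanceAs (FiniteDimensional k (N q)))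
      (subM_me M N hst π (hπ) hnat hme) p ⟨m, hm⟩
      (fun h => hm0 (congrArg Subtype.val h))
  let s' : ∀ q, N q := s
  let f' : ∀ q, N q →ₗ[k] k := f
  have hs1' : ∀ p q (h : p ≤ q), p.1 ∈ J → M.map h (s' p : M.V p) = s' q :=
    fun p q h hp => congrArg Subtype.val (hs1 p q h hp)
  have hs2' : ∀ p : ↥upperT, p.1 ∉ J → s' p = 0 := hs2
  have hf1' : ∀ p q (h : p ≤ q), q.1 ∈ J → ∀ v : N p,
      f' q ⟨M.map h v, hst p q h v v.2⟩ = f' p v := hf1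
  have hf2' : ∀ p : ↥upperT, p.1 ∉ J → f' p = 0 := hf2
  have hsf' : ∀ p : ↥upperT, p.1 ∈ J → f' p (s' p) = 1 := hsf
  have hs3' : ∀ p : ↥upperT, p.1 ∈ J → s' p ≠ 0 := by
    intro p hp h
    have := hsf' p hp
    rw [h, map_zero] at this
    exact zero_ne_one this
  let e' : ∀ q, Module.End k (M.V q) := fun q =>
    (LinearMap.toSpanSingleton k (M.V q) (s' q : M.V q)).comp ((f' q).comp (π q))
  have he' : ∀ q v, e' q v = f' q (π q v) • (s' q : M.V q) := fun q v => rfl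
  have hnat' : ∀ p q (h : p ≤ q) v, M.map h (e' p v) = e' q (M.map h v) := by
    intro p q h v
    rw [he', he', map_smul]
    have h2 : π q (M.map h v) = ⟨M.map h (π p v : M.V p), hst p q h _ (π p v).2⟩ :=
      Subtype.ext (hnat p q h v).symm
    by_cases hq : q.1 ∈ J
    · rw [h2, hf1' p q h hq]
      by_cases hp : p.1 ∈ J
      · rw [hs1' p q h hp]
      · rw [hf2' p hp]; simp
    · rw [hs2' q hq]
      by_cases hp : p.1 ∈ J
      · rw [hs1' p q h hp, hs2' q hq]; simp
      · rw [hs2' p hp]; simp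
  have hidem' : ∀ p, e' p * e' p = e' p := by
    intro p
    ext v
    show e' p (e' p v) = e' p v
    rw [he' p v, map_smul, he', hπ]
    by_cases hp : p.1 ∈ J
    · rw [hsf' p hp, one_smul]
    · rw [hs2' p hp]; simp
  have hcomm' : ∀ e ∈ E, ∀ p, Commute (e p) (e' p) := by
    intro e he p
    ext v
    show e p (e' p v) = e' p (e p v)
    rw [he', he', map_smul, hπe p ⟨e, he⟩, (hmemN _ _).1 (s' p).2 ⟨e, he⟩, map_smul,
      smul_eq_mul, mul_comm, mul_smul]
  have hmem : e' ∈ E := by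
    have hg : GoodSet M (insert e' E) := by
      refine ⟨?_, ?_, ?_⟩
      · rintro e (rfl | he)
        · exact hnat'
        · exact hE'.nat e he
      · rintro e (rfl | he)
        · exact hidem'
        · exact hE'.idem e he
      · rintro e (rfl | he) e'' (rfl | he'') p
        · exact Commute.refl _
        · exact (hcomm' e'' he'' p).symm
        · exact hcomm' e he p
        · exact hE'.comm e he e'' he'' p
    exact hmax hg (Set.subset_insert _ _) (Set.mem_insert _ _)
  have hone : χ ⟨e', hmem⟩ = 1 := by
    have h1 := (hmemN _ _).1 (s' r).2 ⟨e', hmem⟩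
    simp only [he', hπ] at h1
    rw [hsf' r hr] at h1
    have h2 : (s' r : M.V r) ≠ 0 := fun h => hs3' r hr (Subtype.ext h)
    exact (smul_left_injective k h2 h1).symm
  refine ⟨J, hJ, s', hs1', hs2', hs3', fun p v => ⟨f' p v, Subtype.ext ?_⟩⟩
  have h1 := (hmemN _ _).1 v.2 ⟨e', hmem⟩
  simp only [he', hπ] at h1
  rw [hone, one_smul] at h1
  exact h1.symm

theorem exists_proj (M : PersistenceModule k ↥upperT) {E : Set (∀ p, Module.End k (M.V p))}
    (N : (E → k) → ∀ p, Submodule k (M.V p))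
    (hmemN : ∀ χ p (v : M.V p), v ∈ N χ p ↔ ∀ e : E, e.1 p v = χ e • v)
    (hind : ∀ p, iSupIndep fun χ => N χ p) (htop : ∀ p, ⨆ χ, N χ p = ⊤)
    (hst : ∀ χ p q (h : p ≤ q), ∀ v ∈ N χ p, M.map h v ∈ N χ q) :
    ∃ π : ∀ χ p, M.V p →ₗ[k] N χ p, (∀ χ p (v : N χ p), π χ p v = v) ∧
      (∀ χ p q (h : p ≤ q) v, M.map h (π χ p v : M.V p) = π χ q (M.map h v)) ∧
      (∀ χ p (e : E) v, π χ p (e.1 p v) = χ e • π χ p v) := by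
  classical
  obtain ⟨C, hCdef⟩ : ∃ C : (E → k) → ∀ p, Submodule k (M.V p),
      ∀ χ p, C χ p = ⨆ (χ' : E → k) (_ : χ' ≠ χ), N χ' p := ⟨_, fun _ _ => rfl⟩
  have hle : ∀ χ p χ', χ' ≠ χ → N χ' p ≤ C χ p := fun χ p χ' h => by
    rw [hCdef]; exact le_iSup₂_of_le χ' h le_rfl
  have hcompl : ∀ χ p, IsCompl (N χ p) (C χ p) := by
    intro χ p
    refine ⟨by rw [hCdef]; exact hind p χ, ?_⟩
    rw [codisjoint_iff, eq_top_iff, ← htop p]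
    refine iSup_le fun χ' => ?_
    by_cases h : χ' = χ
    · subst h; exact le_sup_left
    · exact le_sup_of_le_right (hle χ p χ' h)
  have hCind : ∀ χ p (W : Submodule k (M.V p)), (∀ χ', χ' ≠ χ → N χ' p ≤ W) → C χ p ≤ W :=
    fun χ p W h => by rw [hCdef]; exact iSup₂_le h
  have hCst : ∀ χ p q (h : p ≤ q), ∀ v ∈ C χ p, M.map h v ∈ C χ q := by
    intro χ p q h
    refine hCind χ p ((C χ q).comap (M.map h)) fun χ' hχ' v hv => ?_
    have h1 := hle χ q χ' hχ'
    exact h1 (hst χ' p q h v hv)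
  have hCe : ∀ χ p (e : E), ∀ v ∈ C χ p, e.1 p v ∈ C χ p := by
    intro χ p e
    refine hCind χ p ((C χ p).comap (e.1 p)) fun χ' hχ' v hv => ?_
    have h1 := hle χ p χ' hχ'
    show e.1 p v ∈ C χ p
    rw [(hmemN _ _ _).1 hv e]
    exact Submodule.smul_mem _ _ (h1 hv)
  obtain ⟨π, hπ, hπC⟩ : ∃ π : ∀ χ p, M.V p →ₗ[k] N χ p, (∀ χ p (v : N χ p), π χ p v = v) ∧
      ∀ χ p, ∀ v ∈ C χ p, π χ p v = 0 :=
    ⟨fun χ p => Submodule.projectionOnto _ _ (hcompl χ p),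
      fun χ p v => Submodule.projectionOnto_apply_left _ v,
      fun χ p v hv => Submodule.projectionOnto_apply_right _ ⟨v, hv⟩⟩
  have hdec : ∀ χ p (v : M.V p), ∃ a : N χ p, ∃ b ∈ C χ p, v = a + b := by
    intro χ p v
    have : v ∈ N χ p ⊔ C χ p := by rw [(hcompl χ p).sup_eq_top]; trivial
    obtain ⟨a, ha, b, hb, rfl⟩ := Submodule.mem_sup.1 this
    exact ⟨⟨a, ha⟩, b, hb, rfl⟩
  have hnat : ∀ χ p q (h : p ≤ q) v, M.map h (π χ p v : M.V p) = π χ q (M.map h v) := by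
    intro χ p q h v
    obtain ⟨a, b, hb, rfl⟩ := hdec χ p v
    rw [map_add, map_add, map_add, hπ, hπC χ p b hb, hπC χ q _ (hCst χ p q h b hb), add_zero,
      add_zero]
    have := hπ χ q ⟨M.map h a, hst χ p q h a a.2⟩
    exact (congrArg Subtype.val this).symm
  have hπe : ∀ χ p (e : E) v, π χ p (e.1 p v) = χ e • π χ p v := by
    intro χ p e v
    obtain ⟨a, b, hb, rfl⟩ := hdec χ p v
    rw [map_add, map_add, map_add, hπ, hπC χ p b hb, hπC χ p _ (hCe χ p e b hb), add_zero,
      add_zero, (hmemN _ _ _).1 a.2 e, map_smul, hπ]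
  exact ⟨π, hπ, hnat, hπe⟩

theorem decomp (M : PersistenceModule k ↥upperT)
    (hfd : ∀ p, FiniteDimensional k (M.V p)) (hme : MiddleExactSub upperT M) :
    ∃ (ι : Type) (J : ι → Set (ℝ × ℝ)) (hJ : ∀ i, IsBlock (J i)),
      Isomorphic M (directSum fun i =>
        intervalModule k {p : ↥upperT | (p : ℝ × ℝ) ∈ J i}
          ((hJ i).isConvex.preimageSub upperT)) := by
  classical
  obtain ⟨E, hE, hmax⟩ := exists_maximal_good M
  have hE' : GoodSet M E := hE
  obtain ⟨N, hN⟩ : ∃ N : (E → k) → ∀ p, Submodule k (M.V p),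
      ∀ p, (fun χ => N χ p) = simEig (fun e : E => e.1 p) :=
    ⟨fun χ p => simEig (fun e : E => e.1 p) χ, fun _ => rfl⟩
  have hmemN : ∀ χ p (v : M.V p), v ∈ N χ p ↔ ∀ e : E, e.1 p v = χ e • v := fun χ p v => by
    rw [show N χ p = simEig (fun e : E => e.1 p) χ from congrFun (hN p) χ]
    exact mem_simEig
  have hind : ∀ p, iSupIndep fun χ => N χ p := fun p => by
    rw [hN p]
    exact simEig_indep _ (fun e => hE'.idem e.1 e.2 p) (fun e e' => hE'.comm _ e.2 _ e'.2 p)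
  have htop : ∀ p, ⨆ χ, N χ p = ⊤ := fun p => by
    have := hfd p
    rw [hN p]
    exact simEig_top _ (fun e => hE'.idem e.1 e.2 p) (fun e e' => hE'.comm _ e.2 _ e'.2 p)
  have hst : ∀ χ p q (h : p ≤ q), ∀ v ∈ N χ p, M.map h v ∈ N χ q := by
    intro χ p q h v hv
    rw [hmemN] at hv ⊢
    intro e
    rw [← hE'.nat e.1 e.2, hv e, map_smul]
  obtain ⟨π, hπ, hnat, hπe⟩ := exists_proj M N hmemN hind htop hst
  have key := fun χ => key_step M hfd hme hE' (fun h => hmax h) χ (N χ) (hmemN χ) (hst χ) (π χ) (hπ χ)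
    (hnat χ) (hπe χ)
  choose J hJ s hs1 hs2 hs3 hgen using key
  refine ⟨{χ : E → k // ∃ p, N χ p ≠ ⊥}, fun i => J i.1 i.2, fun i => hJ i.1 i.2, ?_⟩
  refine assemble M (fun i => N i.1) (fun p => (hind p).comp (f := fun i : {χ : E → k // ∃ p, N χ p ≠ ⊥} => i.1) Subtype.val_injective) ?_ _ _
    (fun i p => s i.1 i.2 p) (fun i p q h hp => hs1 i.1 i.2 p q h hp)
    (fun i p hp => hs2 i.1 i.2 p hp) (fun i p hp => hs3 i.1 i.2 p hp)
    (fun i p v => hgen i.1 i.2 p v)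
  intro p
  rw [eq_top_iff, ← htop p]
  refine iSup_le fun χ => ?_
  by_cases h : ∃ p, N χ p ≠ ⊥
  · exact le_iSup (fun i : {χ : E → k // ∃ p, N χ p ≠ ⊥} => N i.1 p) ⟨χ, h⟩
  · push Not at h
    rw [h p]
    exact bot_le

end Decomp

end PMod

open PMod in
/-- Theorem 1.4 (strictly upper-triangular case): pointwise finite-dimensional middle
exact modules over the strictly upper-triangular subposet of the plane decompose into
restrictions of block modules. -/
theorem stmt3 {k : Type} [Field k] (M : PersistenceModule k ↥upperT)
    (hfd : ∀ p, FiniteDimensional k (M.V p)) (hme : MiddleExactSub upperT M) :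
    ∃ (ι : Type) (J : ι → Set (ℝ × ℝ)) (hJ : ∀ i, IsBlock (J i)),
      Isomorphic M (directSum fun i =>
        intervalModule k {p : ↥upperT | (p : ℝ × ℝ) ∈ J i}
          ((hJ i).isConvex.preimageSub upperT)) := by
  exact PMod.decomp M hfd hme
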